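/- arXiv:1611.08904 — 2 statements merged into one kernel-verified Lean document; each statement's English description precedes it below -/
import Mathlib

section
/- For n ≥ 1 and subsets I, J of {1,...,n-1}, the number of pairs (σ,τ) of permutations in S_n with στ equal to a fixed permutation of descent set {1,...,n-1}, Des(σ)=I and Des(τ)=J equals Σ_{λ ⊢ n} d_{λ,I} · d_{λ',J}, where λ' is the conjugate partition. -/
open scoped Classical

noncomputable section

/-- Descent set of a permutation of `Fin n`, as a subset of `{1, ..., n-1}`
(1-indexed: `i` is a descent of `π` iff `π(i) > π(i+1)`). -/
def permDes {n : ℕ} (σ : Equiv.Perm (Fin n)) : Finset ℕ :=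
  (Finset.Icc 1 (n - 1)).filter fun i =>
    ∃ h : i < n, σ ⟨i, h⟩ < σ ⟨i - 1, by omega⟩

/-- Number of entries of a semistandard Young tableau equal to `j`. -/
def ssytWeight {μ : YoungDiagram} (T : SemistandardYoungTableau μ) (j : ℕ) : ℕ :=
  (μ.cells.filter fun c => T c.1 c.2 = j).card

/-- A standard Young tableau with `n` boxes: each of `1, ..., n` appears exactly once. -/
def IsStdYT {μ : YoungDiagram} (n : ℕ) (T : SemistandardYoungTableau μ) : Prop :=
  ∀ k ∈ Finset.Icc 1 n, (μ.cells.filter fun c => T c.1 c.2 = k).card = 1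

/-- Descent set of a standard Young tableau: `k` is a descent iff `k+1` lies in
a strictly lower row than `k`. -/
def sytDes {μ : YoungDiagram} (n : ℕ) (T : SemistandardYoungTableau μ) : Finset ℕ :=
  (Finset.Icc 1 (n - 1)).filter fun k =>
    ∃ c₁ ∈ μ.cells, ∃ c₂ ∈ μ.cells,
      T c₁.1 c₁.2 = k ∧ T c₂.1 c₂.2 = k + 1 ∧ c₁.1 < c₂.1

/-- `d_{λ,I}`: the number of standard Young tableaux of shape `λ` with descent set `I`. -/
def dCoef (μ : YoungDiagram) (n : ℕ) (I : Finset ℕ) : ℕ :=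
  Nat.card {T : SemistandardYoungTableau μ // IsStdYT n T ∧ sytDes n T = I}

/-- The Young diagram of a partition of `n`. -/
def toYD {n : ℕ} (p : n.Partition) : YoungDiagram where
  cells := (Finset.range n ×ˢ Finset.range n).filter fun c =>
    c.1 < (p.parts.filter fun a => c.2 < a).card
  isLowerSet := by
    intro x y hyx hx
    simp only [Finset.coe_filter, Set.mem_setOf_eq, Finset.mem_product,
      Finset.mem_range] at hx ⊢
    obtain ⟨⟨h1, h2⟩, h3⟩ := hx
    refine ⟨⟨lt_of_le_of_lt hyx.1 h1, lt_of_le_of_lt hyx.2 h2⟩,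
      lt_of_le_of_lt hyx.1 (lt_of_lt_of_le h3 ?_)⟩
    exact Multiset.card_le_card
      (Multiset.monotone_filter_right _ fun a ha => lt_of_le_of_lt hyx.2 ha)

/-!
Multiplying `ρ` by the decreasing permutation complements its descent set. The factorizations of the
decreasing permutation therefore correspond to the permutations `ρ = τ⁻¹` for which `Des(ρ)` is the
complement of `I` and `Des(ρ⁻¹) = J`. The Robinson-Schensted correspondence sends `ρ` to a pair of
standard tableaux of the same shape whose descent sets are `Des(ρ)` and `Des(ρ⁻¹)`. Transposing the
first tableau turns the complement of `I` back into `I`.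

The correspondence is obtained from Fomin's growth diagrams. The shapes along each side of the
square grid are recorded by a lattice word, inversion of `ρ` reflects the diagram, and the local
rules can be run in both directions, so `ρ` and the pair of words on the top and right sides
determine each other.
-/

open scoped symmDiff

/-! ### Words -/

/-- The number of occurrences, among the first `m` letters of the word `q`, of the letter that
stands for row `r`. Rows are numbered from `0` and row `r` is encoded by the letter `r + 1`, so that
the letter `0` can stand for the absence of a letter. -/
def letterCount (q : ℕ → ℕ) (m r : ℕ) : ℕ := Nat.count (fun k => q k = r + 1) m

/-- Yamanouchi (lattice) words of length `n`: in every prefix each letter `r + 1` occurs at least as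
often as the letter `r + 2`. They encode standard Young tableaux. A word of length `n` is a
function on `ℕ` that is nonzero exactly below `n`. -/
structure IsYamanouchi (n : ℕ) (q : ℕ → ℕ) : Prop where
  support : ∀ k, q k ≠ 0 ↔ k < n
  antitone : ∀ m, Antitone (letterCount q m)

/-- The descent set of a Yamanouchi word of length `n`, which is the descent set of the tableau that
it encodes. Its elements are the positions, numbered from `1`, that are followed by a larger
letter. -/
def wordDes (n : ℕ) (q : ℕ → ℕ) : Finset ℕ :=
  (Finset.Icc 1 (n - 1)).filter fun i => q (i - 1) < q i

section Words

variable {n : ℕ} {q q' : ℕ → ℕ}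

theorem letterCount_zero (q : ℕ → ℕ) (r : ℕ) : letterCount q 0 r = 0 := rfl

theorem letterCount_succ (q : ℕ → ℕ) (m r : ℕ) :
    letterCount q (m + 1) r = letterCount q m r + if q m = r + 1 then 1 else 0 :=
  Nat.count_succ _ m

theorem letterCount_eq_zero {m r : ℕ} (h : ∀ k < m, q k ≠ r + 1) : letterCount q m r = 0 :=
  Nat.count_iff_forall_not.2 fun {k} hk => h k hk

theorem eq_of_letterCount_eq (h : ∀ m r, letterCount q m r = letterCount q' m r) : q = q' := by
  have letter_iff (k r : ℕ) : q k = r + 1 ↔ q' k = r + 1 := by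
    have := h (k + 1) r
    rw [letterCount_succ, letterCount_succ, h k r] at this
    grind
  funext k
  rcases Nat.eq_zero_or_eq_succ_pred (q k) with hq | hq
  · rcases Nat.eq_zero_or_eq_succ_pred (q' k) with hq' | hq'
    · rw [hq, hq']
    · exact ((letter_iff k _).2 hq').trans hq'.symm
  · exact hq.trans ((letter_iff k _).1 hq).symm

theorem letterCount_mono (q : ℕ → ℕ) (r : ℕ) : Monotone fun m => letterCount q m r :=
  Nat.count_monotone _

theorem letterCount_lt_letterCount {k m r : ℕ} (hk : q k = r + 1) (hkm : k < m) :
    letterCount q k r < letterCount q m r :=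
  Nat.count_strict_mono hk hkm

theorem exists_of_lt_letterCount {c m r : ℕ} (h : c < letterCount q m r) :
    ∃ k < m, q k = r + 1 ∧ letterCount q k r = c :=
  have hc (hf : (Set.ofPred fun k => q k = r + 1).Finite) := h.trans_le (Nat.count_le_card hf m)
  ⟨_, Nat.nth_lt_of_lt_count h, Nat.nth_mem _ hc, Nat.count_nth hc⟩

theorem eq_zero_of_monotone_letterCount {m : ℕ} (h : Monotone (letterCount q m)) {k : ℕ}
    (hk : k < m) : q k = 0 := by
  by_contra hqk
  obtain ⟨r, hr⟩ := Nat.exists_eq_succ_of_ne_zero hqk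
  let b := (Finset.range m).sup q
  have le_b {l : ℕ} (hl : l < m) : q l ≤ b := Finset.le_sup (Finset.mem_range.2 hl)
  have hb : letterCount q m b = 0 :=
    letterCount_eq_zero fun l hl => ((le_b hl).trans_lt (Nat.lt_succ_self b)).ne
  have hrb : letterCount q m r ≤ letterCount q m b := h (by have := le_b hk; omega)
  have := letterCount_lt_letterCount hr hk
  omega

/-- The cells occupied by the first `m` letters of the word `q`, where every letter adds one cell
at the end of its row. -/
def wordCells (q : ℕ → ℕ) (m : ℕ) : Finset (ℕ × ℕ) :=
  (Finset.range m).image fun k => (q k - 1, letterCount q k (q k - 1))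

theorem mem_wordCells {m r c : ℕ} (h0 : ∀ k < m, q k ≠ 0) :
    (r, c) ∈ wordCells q m ↔ c < letterCount q m r := by
  simp only [wordCells, Finset.mem_image, Finset.mem_range, Prod.mk.injEq]
  constructor
  · rintro ⟨k, hk, rfl, rfl⟩
    exact letterCount_lt_letterCount (by have := h0 k hk; omega) hk
  · intro h
    obtain ⟨k, hk, hqk, rfl⟩ := exists_of_lt_letterCount h
    exact ⟨k, hk, by simp [hqk]⟩

theorem card_wordCells {m : ℕ} (h0 : ∀ k < m, q k ≠ 0) : (wordCells q m).card = m := by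
  refine (Finset.card_image_of_injOn fun a ha b hb hab => ?_).trans (Finset.card_range m)
  obtain ⟨hrow, hcol⟩ := Prod.mk.inj hab
  have ha0 := h0 a (Finset.mem_range.1 ha)
  have hb0 := h0 b (Finset.mem_range.1 hb)
  rw [← hrow] at hcol
  exact Nat.count_injective (p := fun k => q k = q a - 1 + 1) (by omega) (by omega) hcol

theorem IsYamanouchi.eq_zero (hq : IsYamanouchi n q) {k : ℕ} (hk : n ≤ k) : q k = 0 :=
  not_ne_iff.1 ((hq.support k).not.2 hk.not_gt)

theorem IsYamanouchi.letterCount_le (hq : IsYamanouchi n q) (m r : ℕ) :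
    letterCount q m r ≤ letterCount q n r := by
  induction m with
  | zero => exact Nat.zero_le _
  | succ m ih =>
    rcases lt_or_ge m n with hm | hm
    · exact letterCount_mono q r hm
    · rwa [letterCount_succ, hq.eq_zero hm, if_neg r.succ_ne_zero.symm]

theorem IsYamanouchi.exists_rowLen_eq (hq : IsYamanouchi n q) :
    ∃ μ : YoungDiagram, μ.card = n ∧ letterCount q n = μ.rowLen := by
  have h0 (k : ℕ) : k < n → q k ≠ 0 := (hq.support k).2
  have lower : IsLowerSet (wordCells q n : Set (ℕ × ℕ)) := by
    rintro ⟨r, c⟩ ⟨r', c'⟩ hle h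
    rw [Finset.mem_coe, mem_wordCells h0] at h ⊢
    exact (hle.2.trans_lt h).trans_le (hq.antitone n hle.1)
  refine ⟨⟨wordCells q n, lower⟩, card_wordCells h0, funext fun r => ?_⟩
  refine eq_of_forall_lt_iff fun c => ?_
  rw [← mem_wordCells h0, ← YoungDiagram.mem_iff_lt_rowLen, ← YoungDiagram.mem_cells]

end Words

/-! ### Growth diagrams -/

/-- The reverse local rule of growth diagrams, which recovers the labels of the two incoming edges
of a square from the pair `z` of labels of its two outgoing edges. As in words, the label `r + 1`
records that a cell is added to row `r` along the edge, and the label `0` that no cell is added. -/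
def reverseLocalRule (z : ℕ × ℕ) : ℕ × ℕ := if z.1 = z.2 then (z.1 - 1, z.2 - 1) else z

/-- The forward local rule of growth diagrams, which computes the labels of the two outgoing edges
of a square from the labels `z` of its incoming edges and the mark `x` of the square. -/
def localRule (x : Prop) (z : ℕ × ℕ) : ℕ × ℕ :=
  if z.1 = z.2 ∧ (x ∨ z.1 ≠ 0) then (z.1 + 1, z.2 + 1) else z

section LocalRule

theorem reverseLocalRule_swap (z : ℕ × ℕ) :
    reverseLocalRule z.swap = (reverseLocalRule z).swap := by
  grind [reverseLocalRule]

theorem reverseLocalRule_mk_zero (a : ℕ) : reverseLocalRule (a, 0) = (a, 0) := by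
  grind [reverseLocalRule]

theorem reverseLocalRule_zero_mk (b : ℕ) : reverseLocalRule (0, b) = (0, b) := by
  grind [reverseLocalRule]

theorem reverseLocalRule_localRule (x : Prop) (z : ℕ × ℕ) :
    reverseLocalRule (localRule x z) = z := by
  grind [reverseLocalRule, localRule]

theorem localRule_reverseLocalRule (z : ℕ × ℕ) :
    localRule (z = (1, 1)) (reverseLocalRule z) = z := by
  grind [reverseLocalRule, localRule]

theorem localRule_eq_one_iff {x : Prop} {z : ℕ × ℕ} (h : x → z = (0, 0)) :
    localRule x z = (1, 1) ↔ x := by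
  grind [localRule]

theorem reverseLocalRule_conservation (z : ℕ × ℕ) (r : ℕ) :
    ((if (reverseLocalRule z).1 = r + 1 then 1 else 0) + if z.2 = r + 1 then 1 else 0) =
      (if (reverseLocalRule z).2 = r + 1 then 1 else 0) + if z.1 = r + 1 then 1 else 0 := by
  grind [reverseLocalRule]

theorem antitone_iff_antitone_of_reverseLocalRule (z : ℕ × ℕ) {s s₁ s₂ s₃ : ℕ → ℤ}
    (h₁ : ∀ r, s₁ r = s r + if (reverseLocalRule z).1 = r + 1 then 1 else 0)
    (h₂ : ∀ r, s₂ r = s r + if (reverseLocalRule z).2 = r + 1 then 1 else 0)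
    (h₃ : ∀ r, s₃ r = s₂ r + if z.1 = r + 1 then 1 else 0)
    (anti₁ : Antitone s₁) (anti₂ : Antitone s₂) : Antitone s ↔ Antitone s₃ := by
  have succ_le (r : ℕ) : s (r + 1) ≤ s r ↔ s₃ (r + 1) ≤ s₃ r := by
    have h₁' := anti₁ (Nat.le_succ r)
    have h₂' := anti₂ (Nat.le_succ r)
    have hs := h₁ r
    grind [reverseLocalRule]
  exact ⟨fun h => antitone_nat_of_succ_le fun r => (succ_le r).1 (h (Nat.le_succ r)),
    fun h => antitone_nat_of_succ_le fun r => (succ_le r).2 (h (Nat.le_succ r))⟩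

end LocalRule

/-- A growth on the square grid is an edge labelling in which the labels around every square obey
the reverse local rule. The edge from `(i, j)` to `(i + 1, j)` carries the label `H i j` and the
edge from `(i, j)` to `(i, j + 1)` carries the label `V i j`. -/
def IsGrowth (H V : ℕ → ℕ → ℕ) : Prop :=
  ∀ i j, (H i j, V i j) = reverseLocalRule (H i (j + 1), V (i + 1) j)

/-- A square of a growth is marked if both its outgoing edges carry the label `1`, so that its
incoming edges carry no label. -/
def IsMarked (H V : ℕ → ℕ → ℕ) (i j : ℕ) : Prop := H i (j + 1) = 1 ∧ V (i + 1) j = 1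

/-- A growth diagram is a growth from the empty shape: the edges on the two axes carry no label. -/
structure IsGrowthDiagram (H V : ℕ → ℕ → ℕ) : Prop where
  isGrowth : IsGrowth H V
  bottom : ∀ i, H i 0 = 0
  left : ∀ j, V 0 j = 0

/-- The row lengths of the shape at the vertex `(i, j)` of a growth, relative to the shape at the
origin. They are read off along the path through the vertex `(0, j)`. -/
def relativeShape (H V : ℕ → ℕ → ℕ) (i j r : ℕ) : ℕ :=
  letterCount (V 0) j r + letterCount (fun k => H k j) i r

section Growth

variable {n : ℕ} {H V : ℕ → ℕ → ℕ}

theorem IsGrowth.symm (g : IsGrowth H V) : IsGrowth (flip V) (flip H) := fun i j => by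
  have := congrArg Prod.swap (g j i)
  rwa [← reverseLocalRule_swap] at this

theorem IsGrowthDiagram.symm (g : IsGrowthDiagram H V) : IsGrowthDiagram (flip V) (flip H) :=
  ⟨g.isGrowth.symm, g.left, g.bottom⟩

theorem isMarked_flip {i j : ℕ} : IsMarked (flip V) (flip H) i j ↔ IsMarked H V j i := and_comm

theorem IsGrowth.label_succ_ne_zero_iff (g : IsGrowth H V) (i j : ℕ) :
    H i (j + 1) ≠ 0 ↔ H i j ≠ 0 ∨ IsMarked H V i j := by
  grind [g i j, IsMarked, reverseLocalRule]

theorem IsGrowth.label_eq_zero_of_isMarked (g : IsGrowth H V) {i j : ℕ} (hm : IsMarked H V i j) :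
    H i j = 0 := by
  grind [g i j, IsMarked, reverseLocalRule]

theorem IsGrowthDiagram.label_ne_zero_iff (g : IsGrowthDiagram H V) (i j : ℕ) :
    H i j ≠ 0 ↔ ∃ k < j, IsMarked H V i k := by
  induction j with
  | zero => simp [g.bottom i]
  | succ j ih =>
    rw [g.isGrowth.label_succ_ne_zero_iff, ih]
    simp only [Nat.exists_lt_succ_right]

theorem IsGrowthDiagram.isMarked_unique (g : IsGrowthDiagram H V) {i j k : ℕ}
    (hj : IsMarked H V i j) (hk : IsMarked H V i k) : j = k := by
  have le {a b : ℕ} (ha : IsMarked H V i a) (hb : IsMarked H V i b) : b ≤ a :=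
    not_lt.1 fun hab =>
      (g.label_ne_zero_iff i b).2 ⟨a, hab, ha⟩ (g.isGrowth.label_eq_zero_of_isMarked hb)
  exact (le hk hj).antisymm (le hj hk)

theorem IsGrowthDiagram.biUnique_isMarked (g : IsGrowthDiagram H V) :
    Relator.BiUnique (IsMarked H V) :=
  ⟨fun _ _ _ hi hk => g.symm.isMarked_unique (isMarked_flip.2 hi) (isMarked_flip.2 hk),
    fun _ _ _ => g.isMarked_unique⟩

theorem IsGrowth.label_lt_label_of_le (g : IsGrowth H V) {i j m : ℕ} (hjm : j ≤ m)
    (h : H i j < H (i + 1) j) : H i m < H (i + 1) m := by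
  induction m, hjm using Nat.le_induction with
  | base => exact h
  | succ m _ ih => grind [g i m, g (i + 1) m, reverseLocalRule]

theorem IsGrowth.label_le_label_of_le (g : IsGrowth H V) {i j m : ℕ} (hjm : j ≤ m)
    (h0 : H i j ≠ 0) (h : H (i + 1) j ≤ H i j) : H (i + 1) m ≤ H i m := by
  suffices H i m ≠ 0 ∧ H (i + 1) m ≤ H i m from this.2
  induction m, hjm using Nat.le_induction with
  | base => exact ⟨h0, h⟩
  | succ m _ ih => grind [g i m, g (i + 1) m, reverseLocalRule]

theorem IsGrowthDiagram.label_lt_label_iff (g : IsGrowthDiagram H V) {i j k l : ℕ}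
    (hk : IsMarked H V i k) (hl : IsMarked H V (i + 1) l) (hkj : k < j) (hlj : l < j) :
    H i j < H (i + 1) j ↔ l < k := by
  refine ⟨fun h => ?_, fun hlk => ?_⟩
  · contrapose! h
    have h0 : H i (l + 1) ≠ 0 := (g.label_ne_zero_iff i _).2 ⟨k, Nat.lt_succ_of_le h, hk⟩
    refine g.isGrowth.label_le_label_of_le hlj h0 ?_
    rw [hl.1]
    exact Nat.one_le_iff_ne_zero.2 h0
  · refine g.isGrowth.label_lt_label_of_le hkj.le ?_
    rw [g.isGrowth.label_eq_zero_of_isMarked hk]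
    exact Nat.pos_of_ne_zero ((g.label_ne_zero_iff _ _).2 ⟨l, hlk, hl⟩)

theorem relativeShape_succ_left (H V : ℕ → ℕ → ℕ) (i j r : ℕ) :
    relativeShape H V (i + 1) j r = relativeShape H V i j r + if H i j = r + 1 then 1 else 0 := by
  simp only [relativeShape, letterCount_succ, add_assoc]

theorem IsGrowth.relativeShape_succ_right (g : IsGrowth H V) (i j r : ℕ) :
    relativeShape H V i (j + 1) r =
      relativeShape H V i j r + if V i j = r + 1 then 1 else 0 := by
  induction i with
  | zero => simp only [relativeShape, letterCount_succ, letterCount_zero, add_zero]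
  | succ i ih =>
    have := reverseLocalRule_conservation (H i (j + 1), V (i + 1) j) r
    rw [← g i j] at this
    dsimp only at this
    rw [relativeShape_succ_left, relativeShape_succ_left, ih]
    omega

theorem IsGrowth.relativeShape_flip (g : IsGrowth H V) (i j r : ℕ) :
    relativeShape (flip V) (flip H) j i r = relativeShape H V i j r := by
  induction j with
  | zero => exact add_comm _ _
  | succ j ih => rw [relativeShape_succ_left, ih, g.relativeShape_succ_right]; rfl

theorem IsGrowth.antitone_relativeShape_sub_iff (g : IsGrowth H V) (h : ℕ → ℤ) {i j : ℕ}
    (lower : Antitone fun r => relativeShape H V (i + 1) j r - h r)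
    (upper : Antitone fun r => relativeShape H V i (j + 1) r - h r) :
    (Antitone fun r => relativeShape H V i j r - h r) ↔
      Antitone fun r => relativeShape H V (i + 1) (j + 1) r - h r := by
  refine antitone_iff_antitone_of_reverseLocalRule (H i (j + 1), V (i + 1) j)
    (fun r => ?_) (fun r => ?_) (fun r => ?_) lower upper
  · rw [relativeShape_succ_left, ← g i j]
    push_cast
    ring
  · rw [g.relativeShape_succ_right, ← g i j]
    push_cast
    ring
  · rw [relativeShape_succ_left]
    push_cast
    ring

theorem IsGrowthDiagram.relativeShape_eq (g : IsGrowthDiagram H V) (i j : ℕ) :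
    relativeShape H V i j = letterCount (fun k => H k j) i := by
  funext r
  have h0 : letterCount (V 0) j r = 0 := letterCount_eq_zero fun k _ => by simp [g.left k]
  rw [relativeShape, h0, zero_add]

theorem IsGrowthDiagram.letterCount_eq (g : IsGrowthDiagram H V) (i j : ℕ) :
    letterCount (fun k => H k j) i = letterCount (V i) j := by
  funext r
  rw [← g.relativeShape_eq, ← g.isGrowth.relativeShape_flip, g.symm.relativeShape_eq]
  rfl

theorem IsGrowthDiagram.antitone_letterCount (g : IsGrowthDiagram H V) (i j : ℕ) :
    Antitone (letterCount (fun k => H k j) i) := by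
  rw [← g.relativeShape_eq]
  have cast_iff (i j : ℕ) : (Antitone fun r => (relativeShape H V i j r : ℤ) - (0 : ℕ → ℤ) r) ↔
      Antitone (relativeShape H V i j) := by
    simp [Antitone]
  induction i generalizing j with
  | zero => rw [g.relativeShape_eq]; exact antitone_const
  | succ i ih =>
    induction j with
    | zero =>
      rw [g.relativeShape_eq, g.letterCount_eq]
      exact antitone_const
    | succ j ihj =>
      rw [← cast_iff, ← g.isGrowth.antitone_relativeShape_sub_iff _ ((cast_iff _ _).2 ihj)
        ((cast_iff _ _).2 (ih (j + 1)))]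
      exact (cast_iff _ _).2 (ih j)

theorem IsGrowth.antitone_relativeShape_sub (g : IsGrowth H V) (h : ℕ → ℤ)
    (top : ∀ i, Antitone fun r => relativeShape H V i n r - h r)
    (right : ∀ j, Antitone fun r => relativeShape H V n j r - h r) {i j : ℕ}
    (hi : i ≤ n) (hj : j ≤ n) : Antitone fun r => relativeShape H V i j r - h r := by
  induction hi using Nat.decreasingInduction generalizing j with
  | self => exact right j
  | of_succ i _ ih =>
    induction hj using Nat.decreasingInduction with
    | self => exact top i
    | of_succ j hj ihj => exact (g.antitone_relativeShape_sub_iff h (ih hj.le) ihj).2 (ih hj)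

theorem IsGrowth.left_eq_zero (g : IsGrowth H V)
    (top : ∀ i, Antitone (letterCount (fun k => H k n) i))
    (right : ∀ j, Antitone (letterCount (V n) j))
    (corner : letterCount (fun k => H k n) n = letterCount (V n) n) {j : ℕ} (hj : j < n) :
    V 0 j = 0 := by
  refine eq_zero_of_monotone_letterCount (m := n) ?_ hj
  have top_eq (i r : ℕ) : relativeShape H V i n r =
      letterCount (V 0) n r + letterCount (fun k => H k n) i r := rfl
  have right_eq (j r : ℕ) : relativeShape H V n j r =
      letterCount (fun k => H k 0) n r + letterCount (V n) j r :=
    (g.relativeShape_flip n j r).symm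
  have axes_eq (r : ℕ) : letterCount (V 0) n r = letterCount (fun k => H k 0) n r := by
    have := (top_eq n r).symm.trans (right_eq n r)
    rw [corner] at this
    omega
  -- With the content of the left side subtracted, the shapes along the top and right sides become
  -- partitions and the shape at the origin becomes minus that content.
  have anti := g.antitone_relativeShape_sub (n := n) (fun r => letterCount (V 0) n r)
    (by simpa [top_eq, Antitone] using top) (by simpa [right_eq, ← axes_eq, Antitone] using right)
    (Nat.zero_le n) (Nat.zero_le n)
  intro r r' hr
  have h0 (r : ℕ) : relativeShape H V 0 0 r = 0 := rfl
  simpa [h0] using anti hr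

theorem IsGrowth.bottom_eq_zero (g : IsGrowth H V) {i : ℕ} (h : H i n = 0) : H i 0 = 0 := by
  contrapose! h
  induction n with
  | zero => exact h
  | succ j ih => exact (g.label_succ_ne_zero_iff i j).2 (Or.inl ih)

theorem IsGrowth.isGrowthDiagram (g : IsGrowth H V) (hH : IsYamanouchi n fun k => H k n)
    (hV : IsYamanouchi n (V n)) (corner : letterCount (fun k => H k n) n = letterCount (V n) n) :
    IsGrowthDiagram H V := by
  refine ⟨g, fun i => ?_, fun j => ?_⟩
  · rcases lt_or_ge i n with hi | hi
    · exact g.symm.left_eq_zero hV.antitone hH.antitone corner.symm hi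
    · exact g.bottom_eq_zero (hH.eq_zero hi)
  · rcases lt_or_ge j n with hj | hj
    · exact g.left_eq_zero hH.antitone hV.antitone corner hj
    · exact g.symm.bottom_eq_zero (hV.eq_zero hj)

end Growth

section GrowthExistence

variable {n : ℕ} {H V H' V' : ℕ → ℕ → ℕ}

theorem exists_grid_of_step {α β : Type*} (F : ℕ → ℕ → α × β → α × β) (h0 : ℕ → α)
    (v0 : ℕ → β) : ∃ (H : ℕ → ℕ → α) (V : ℕ → ℕ → β),
      (∀ i, H i 0 = h0 i) ∧ (∀ j, V 0 j = v0 j) ∧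
      ∀ i j, (H i (j + 1), V (i + 1) j) = F i j (H i j, V i j) := by
  let col (j : ℕ) (h : ℕ → α) : ℕ → β := Nat.rec (v0 j) fun i v => (F i j (h i, v)).2
  let row : ℕ → ℕ → α := Nat.rec h0 fun j h i => (F i j (h i, col j h i)).1
  exact ⟨fun i j => row j i, fun i j => col j (row j) i, fun _ => rfl, fun _ => rfl,
    fun _ _ => rfl⟩

theorem exists_isGrowthDiagram {X : ℕ → ℕ → Prop} (hX : Relator.BiUnique X) :
    ∃ H V, IsGrowthDiagram H V ∧ ∀ i j, IsMarked H V i j ↔ X i j := by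
  obtain ⟨H, V, bottom, left, step⟩ :=
    exists_grid_of_step (fun i j z => localRule (X i j) z) (fun _ => 0) (fun _ => 0)
  have mark_of_H {i j : ℕ} (h : H i j ≠ 0) : ∃ k < j, X i k := by
    induction j with
    | zero => exact absurd (bottom i) h
    | succ j ih => grind [step i j, localRule]
  have mark_of_V {i j : ℕ} (h : V i j ≠ 0) : ∃ k < i, X k j := by
    induction i with
    | zero => exact absurd (left j) h
    | succ i ih => grind [step i j, localRule]
  have unlabelled {i j : ℕ} (hx : X i j) : (H i j, V i j) = (0, 0) := by
    by_contra hne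
    rcases not_and_or.1 (Prod.mk_inj.not.1 hne) with h | h
    · obtain ⟨k, hk, hik⟩ := mark_of_H h
      exact hk.ne (hX.2 hik hx)
    · obtain ⟨k, hk, hkj⟩ := mark_of_V h
      exact hk.ne (hX.1 hkj hx)
  refine ⟨H, V, ⟨fun i j => ?_, bottom, left⟩, fun i j => ?_⟩
  · rw [step, reverseLocalRule_localRule]
  · rw [IsMarked, ← Prod.mk_inj, step]
    exact localRule_eq_one_iff unlabelled

theorem IsGrowth.eq_localRule (g : IsGrowth H V) (i j : ℕ) :
    (H i (j + 1), V (i + 1) j) = localRule (IsMarked H V i j) (H i j, V i j) := by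
  rw [g i j, IsMarked, ← Prod.mk_inj, localRule_reverseLocalRule]

theorem IsGrowthDiagram.eq_of_isMarked_iff (g : IsGrowthDiagram H V) (g' : IsGrowthDiagram H' V')
    (h : ∀ i j, IsMarked H V i j ↔ IsMarked H' V' i j) : H = H' := by
  suffices row : ∀ j i, H i j = H' i j from funext₂ fun i j => row j i
  intro j
  induction j with
  | zero => exact fun i => by rw [g.bottom, g'.bottom]
  | succ j ihj =>
    have square {i : ℕ} (hV : V i j = V' i j) :
        (H i (j + 1), V (i + 1) j) = (H' i (j + 1), V' (i + 1) j) := by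
      rw [g.isGrowth.eq_localRule, g'.isGrowth.eq_localRule, ihj, hV, h]
    have col (i : ℕ) : V i j = V' i j := by
      induction i with
      | zero => rw [g.left, g'.left]
      | succ i ihi => exact (Prod.mk_inj.1 (square ihi)).2
    exact fun i => (Prod.mk_inj.1 (square (col i))).1

theorem IsGrowth.eq_of_eq_boundary (g : IsGrowth H V) (g' : IsGrowth H' V')
    (top : ∀ i, H i n = H' i n) (right : ∀ j, V n j = V' n j) {i j : ℕ} (hi : i < n) (hj : j ≤ n) :
    H i j = H' i j := by
  induction hj using Nat.decreasingInduction generalizing i with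
  | self => exact top i
  | of_succ j _ ihj =>
    have square {i : ℕ} (hi : i < n) (hV : V (i + 1) j = V' (i + 1) j) :
        (H i j, V i j) = (H' i j, V' i j) := by
      rw [g i j, g' i j, ihj hi, hV]
    have col {i : ℕ} (hi : i ≤ n) : V i j = V' i j := by
      induction hi using Nat.decreasingInduction with
      | self => exact right j
      | of_succ i hi ihi => exact (Prod.mk_inj.1 (square hi ihi)).2
    exact (Prod.mk_inj.1 (square hi (col hi))).1

theorem exists_isGrowth_of_boundary {q p : ℕ → ℕ} (hq : ∀ i, n ≤ i → q i = 0)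
    (hp : ∀ j, n ≤ j → p j = 0) :
    ∃ H V, IsGrowth H V ∧ (∀ i j, n ≤ j → H i j = q i) ∧ ∀ i j, n ≤ i → V i j = p j := by
  obtain ⟨A, B, bottom, left, step⟩ := exists_grid_of_step (fun _ _ z => reverseLocalRule z)
    (fun i => q (n - 1 - i)) (fun j => p (n - 1 - j))
  have sub_sub {i : ℕ} (hi : i < n) : n - 1 - (n - 1 - i) = i := by omega
  let H (i j : ℕ) := if i < n then A (n - 1 - i) (n - j) else 0
  let V (i j : ℕ) := if j < n then B (n - i) (n - 1 - j) else 0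
  have top (i j : ℕ) (hj : n ≤ j) : H i j = q i := by
    rcases lt_or_ge i n with hi | hi
    · simp [H, hi, Nat.sub_eq_zero_of_le hj, bottom, sub_sub hi]
    · simp [H, hi.not_gt, hq i hi]
  have right (i j : ℕ) (hi : n ≤ i) : V i j = p j := by
    rcases lt_or_ge j n with hj | hj
    · simp [V, hj, Nat.sub_eq_zero_of_le hi, left, sub_sub hj]
    · simp [V, hj.not_gt, hp j hj]
  refine ⟨H, V, fun i j => ?_, top, right⟩
  rcases lt_or_ge i n with hi | hi
  · rcases lt_or_ge j n with hj | hj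
    · have := step (n - 1 - i) (n - 1 - j)
      rw [show n - 1 - j + 1 = n - j by omega, show n - 1 - i + 1 = n - i by omega] at this
      simp only [H, V, hi, hj, if_true]
      rw [this, Nat.sub_sub n 1 i, Nat.sub_sub n 1 j, add_comm 1 i, add_comm 1 j]
    · have hV (i : ℕ) : V i j = 0 := if_neg hj.not_gt
      rw [top i j hj, top i (j + 1) (by omega), hV, hV, reverseLocalRule_mk_zero]
  · have hH (j : ℕ) : H i j = 0 := if_neg hi.not_gt
    rw [right i j hi, right (i + 1) j (by omega), hH, hH, reverseLocalRule_zero_mk]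

end GrowthExistence

/-! ### The Robinson-Schensted correspondence for words -/

/-- The graph of a permutation of `Fin n`, as a relation on `ℕ`. -/
def permGraph {n : ℕ} (ρ : Equiv.Perm (Fin n)) (i j : ℕ) : Prop :=
  ∃ h : i < n, (ρ ⟨i, h⟩ : ℕ) = j

/-- The growth diagram of a permutation `ρ`, in which the marked squares form the graph of `ρ`. -/
structure IsGrowthOf {n : ℕ} (ρ : Equiv.Perm (Fin n)) (H V : ℕ → ℕ → ℕ) : Prop extends
    IsGrowthDiagram H V where
  isMarked_iff : ∀ i j, IsMarked H V i j ↔ permGraph ρ i j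

section PermGrowth

variable {n : ℕ} {ρ ρ' : Equiv.Perm (Fin n)} {H V H' V' : ℕ → ℕ → ℕ} {q p : ℕ → ℕ}

theorem permGraph_apply (ρ : Equiv.Perm (Fin n)) (i : Fin n) : permGraph ρ i (ρ i) := ⟨i.2, rfl⟩

theorem permGraph_inv (ρ : Equiv.Perm (Fin n)) {i j : ℕ} :
    permGraph ρ⁻¹ i j ↔ permGraph ρ j i := by
  have of_inv {ρ : Equiv.Perm (Fin n)} {i j : ℕ} : permGraph ρ⁻¹ i j → permGraph ρ j i := by
    rintro ⟨hi, rfl⟩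
    exact ⟨(ρ⁻¹ ⟨i, hi⟩).2, by simp⟩
  exact ⟨of_inv, fun h => of_inv (by rwa [inv_inv])⟩

theorem biUnique_permGraph (ρ : Equiv.Perm (Fin n)) : Relator.BiUnique (permGraph ρ) := by
  have right (ρ : Equiv.Perm (Fin n)) : Relator.RightUnique (permGraph ρ) := by
    rintro i j k ⟨_, rfl⟩ ⟨_, rfl⟩
    rfl
  exact ⟨fun i j k hi hk => right ρ⁻¹ ((permGraph_inv ρ).2 hi) ((permGraph_inv ρ).2 hk), right ρ⟩

theorem exists_permGraph_eq {R : ℕ → ℕ → Prop} (hR : Relator.BiUnique R)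
    (dom : ∀ i, (∃ j, R i j) ↔ i < n) (cod : ∀ i j, R i j → j < n) :
    ∃ ρ : Equiv.Perm (Fin n), permGraph ρ = R := by
  choose f hf using fun i : Fin n => (dom i).2 i.2
  let F (i : Fin n) : Fin n := ⟨f i, cod i _ (hf i)⟩
  have inj : Function.Injective F := fun i j h => by
    have hfij : f i = f j := congrArg Fin.val h
    exact Fin.ext (hR.1 (hf i) (hfij ▸ hf j))
  refine ⟨Equiv.ofBijective F (Finite.injective_iff_bijective.1 inj), funext₂ fun i j => ?_⟩
  refine propext ⟨?_, fun h => ?_⟩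
  · rintro ⟨hi, rfl⟩
    exact hf ⟨i, hi⟩
  · have hi := (dom i).1 ⟨j, h⟩
    exact ⟨hi, hR.2 (hf ⟨i, hi⟩) h⟩

theorem exists_isGrowthOf (ρ : Equiv.Perm (Fin n)) : ∃ H V, IsGrowthOf ρ H V :=
  have ⟨H, V, g, h⟩ := exists_isGrowthDiagram (biUnique_permGraph ρ)
  ⟨H, V, g, h⟩

theorem IsGrowthOf.inv (g : IsGrowthOf ρ H V) : IsGrowthOf ρ⁻¹ (flip V) (flip H) :=
  ⟨g.toIsGrowthDiagram.symm, fun _ _ => by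
    rw [isMarked_flip, g.isMarked_iff, permGraph_inv]⟩

theorem IsGrowthOf.label_ne_zero_iff (g : IsGrowthOf ρ H V) (i : ℕ) : H i n ≠ 0 ↔ i < n := by
  simp only [g.toIsGrowthDiagram.label_ne_zero_iff, g.isMarked_iff]
  exact ⟨fun ⟨_, _, hi, _⟩ => hi, fun hi => ⟨_, (ρ ⟨i, hi⟩).2, hi, rfl⟩⟩

theorem IsGrowthOf.isYamanouchi (g : IsGrowthOf ρ H V) : IsYamanouchi n fun i => H i n :=
  ⟨g.label_ne_zero_iff, fun m => g.antitone_letterCount m n⟩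

theorem IsGrowthOf.wordDes_eq (g : IsGrowthOf ρ H V) : wordDes n (fun i => H i n) = permDes ρ := by
  refine Finset.filter_congr fun i hi => ?_
  obtain ⟨h1, hin⟩ := Finset.mem_Icc.1 hi
  obtain ⟨i, rfl⟩ := Nat.exists_eq_add_of_le' h1
  have hi : i + 1 < n := by omega
  have mark (k : Fin n) : IsMarked H V k (ρ k) := (g.isMarked_iff _ _).2 (permGraph_apply ρ k)
  refine (g.label_lt_label_iff (mark ⟨i, by omega⟩) (mark ⟨i + 1, hi⟩) (ρ _).2 (ρ _).2).trans ?_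
  exact ⟨fun h => ⟨hi, h⟩, fun ⟨_, h⟩ => h⟩

/-- The word of the recording tableau of a permutation under the Robinson-Schensted correspondence,
read off the top edges of its growth diagram. -/
def recordingWord (ρ : Equiv.Perm (Fin n)) (i : ℕ) : ℕ := (exists_isGrowthOf ρ).choose i n

theorem IsGrowthOf.recordingWord_eq (g : IsGrowthOf ρ H V) : recordingWord ρ = fun i => H i n := by
  obtain ⟨V', g'⟩ := (exists_isGrowthOf ρ).choose_spec
  rw [g.eq_of_isMarked_iff g'.toIsGrowthDiagram fun i j => by
    rw [g.isMarked_iff, g'.isMarked_iff]]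
  rfl

theorem isYamanouchi_recordingWord (ρ : Equiv.Perm (Fin n)) :
    IsYamanouchi n (recordingWord ρ) := by
  obtain ⟨H, V, g⟩ := exists_isGrowthOf ρ
  exact g.recordingWord_eq ▸ g.isYamanouchi

theorem wordDes_recordingWord (ρ : Equiv.Perm (Fin n)) :
    wordDes n (recordingWord ρ) = permDes ρ := by
  obtain ⟨H, V, g⟩ := exists_isGrowthOf ρ
  rw [g.recordingWord_eq, g.wordDes_eq]

theorem letterCount_recordingWord_inv (ρ : Equiv.Perm (Fin n)) :
    letterCount (recordingWord ρ⁻¹) n = letterCount (recordingWord ρ) n := by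
  obtain ⟨H, V, g⟩ := exists_isGrowthOf ρ
  rw [g.recordingWord_eq, g.inv.recordingWord_eq, g.letterCount_eq]
  rfl

theorem eq_of_recordingWord_eq (h : recordingWord ρ = recordingWord ρ')
    (hinv : recordingWord ρ⁻¹ = recordingWord ρ'⁻¹) : ρ = ρ' := by
  obtain ⟨H, V, g⟩ := exists_isGrowthOf ρ
  obtain ⟨H', V', g'⟩ := exists_isGrowthOf ρ'
  rw [g.recordingWord_eq, g'.recordingWord_eq] at h
  rw [g.inv.recordingWord_eq, g'.inv.recordingWord_eq] at hinv
  ext i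
  have top : H i (ρ i + 1) = H' i (ρ i + 1) :=
    g.isGrowth.eq_of_eq_boundary g'.isGrowth (congrFun h) (congrFun hinv) i.2 (ρ i).2
  have right : V (i + 1) (ρ i) = V' (i + 1) (ρ i) :=
    g.inv.isGrowth.eq_of_eq_boundary g'.inv.isGrowth (congrFun hinv) (congrFun h) (ρ i).2 i.2
  have mark : IsMarked H V i (ρ i) := (g.isMarked_iff _ _).2 (permGraph_apply ρ i)
  rw [IsMarked, top, right] at mark
  exact ((g'.isMarked_iff _ _).1 mark).2.symm

theorem exists_recordingWord_eq (hq : IsYamanouchi n q) (hp : IsYamanouchi n p)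
    (h : letterCount q n = letterCount p n) :
    ∃ ρ : Equiv.Perm (Fin n), recordingWord ρ = q ∧ recordingWord ρ⁻¹ = p := by
  obtain ⟨H, V, g, top, right⟩ :=
    exists_isGrowth_of_boundary (fun _ => hq.eq_zero) (fun _ => hp.eq_zero)
  have topRow : (fun i => H i n) = q := funext fun i => top i n le_rfl
  have rightCol : V n = p := funext fun j => right n j le_rfl
  have gd : IsGrowthDiagram H V :=
    g.isGrowthDiagram (topRow ▸ hq) (rightCol ▸ hp) (by rw [topRow, rightCol, h])
  have row_lt {i j : ℕ} (hm : IsMarked H V i j) : i < n := by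
    rw [← hq.support, ← top i (j + 1 + n) (by omega), gd.label_ne_zero_iff]
    exact ⟨j, by omega, hm⟩
  have col_lt {i j : ℕ} (hm : IsMarked H V i j) : j < n := by
    rw [← hp.support, ← right (i + 1 + n) j (by omega)]
    exact (gd.symm.label_ne_zero_iff j _).2 ⟨i, by omega, isMarked_flip.2 hm⟩
  have dom (i : ℕ) : (∃ j, IsMarked H V i j) ↔ i < n := by
    refine ⟨fun ⟨j, hm⟩ => row_lt hm, fun hi => ?_⟩
    rw [← hq.support, ← top i n le_rfl, gd.label_ne_zero_iff] at hi
    exact hi.imp fun _ => And.right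
  obtain ⟨ρ, hρ⟩ := exists_permGraph_eq gd.biUnique_isMarked dom fun i j => col_lt
  have gρ : IsGrowthOf ρ H V := ⟨gd, fun i j => by rw [hρ]⟩
  exact ⟨ρ, gρ.recordingWord_eq.trans topRow, gρ.inv.recordingWord_eq.trans rightCol⟩

end PermGrowth

/-! ### Standard tableaux and Yamanouchi words -/

section StandardTableaux

variable {μ : YoungDiagram} {n : ℕ} {T : SemistandardYoungTableau μ}

theorem bijOn_of_surjOn_entries (hμ : μ.card = n)
    (h : Set.SurjOn (fun x : ℕ × ℕ => T x.1 x.2) μ.cells (Finset.Icc 1 n)) :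
    Set.BijOn (fun x : ℕ × ℕ => T x.1 x.2) μ.cells (Finset.Icc 1 n) := by
  have hsub : Finset.Icc 1 n ⊆ μ.cells.image fun x : ℕ × ℕ => T x.1 x.2 := by
    rw [← Finset.coe_subset, Finset.coe_image]
    exact h
  have hcard : μ.cells.card = (Finset.Icc 1 n).card := by
    rw [Nat.card_Icc, add_tsub_cancel_right]
    exact hμ
  have himage := Finset.eq_of_subset_of_card_le hsub (Finset.card_image_le.trans hcard.le)
  rw [himage] at hcard ⊢
  rw [Finset.coe_image]
  exact (Finset.card_image_iff.1 hcard.symm).bijOn_image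

theorem isStdYT_iff_surjOn (hμ : μ.card = n) :
    IsStdYT n T ↔ Set.SurjOn (fun x : ℕ × ℕ => T x.1 x.2) μ.cells (Finset.Icc 1 n) := by
  refine ⟨fun hT k hk => ?_, fun h k hk => ?_⟩
  · obtain ⟨x, hx⟩ := Finset.card_pos.1 (hT k hk).ge
    exact ⟨x, Finset.mem_filter.1 hx⟩
  · obtain ⟨x, hx, hxk⟩ := h hk
    refine Finset.card_eq_one.2 ⟨x, Finset.ext fun y => ?_⟩
    rw [Finset.mem_filter, Finset.mem_singleton]
    refine ⟨fun ⟨hy, hyk⟩ => ?_, fun h => h ▸ ⟨hx, hxk⟩⟩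
    exact (bijOn_of_surjOn_entries hμ h).injOn hy hx (hyk.trans hxk.symm)

theorem IsStdYT.bijOn (hT : IsStdYT n T) (hμ : μ.card = n) :
    Set.BijOn (fun x : ℕ × ℕ => T x.1 x.2) μ.cells (Finset.Icc 1 n) :=
  bijOn_of_surjOn_entries hμ ((isStdYT_iff_surjOn hμ).1 hT)

theorem IsStdYT.entry_mem (hT : IsStdYT n T) (hμ : μ.card = n) {r c : ℕ} (h : (r, c) ∈ μ) :
    T r c ∈ Finset.Icc 1 n :=
  (hT.bijOn hμ).mapsTo h

theorem IsStdYT.cell_eq (hT : IsStdYT n T) (hμ : μ.card = n) {x y : ℕ × ℕ} (hx : x ∈ μ)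
    (hy : y ∈ μ) (h : T x.1 x.2 = T y.1 y.2) : x = y :=
  (hT.bijOn hμ).injOn hx hy h

theorem IsStdYT.exists_cell (hT : IsStdYT n T) (hμ : μ.card = n) {k : ℕ}
    (hk : k ∈ Finset.Icc 1 n) : ∃ x ∈ μ, T x.1 x.2 = k :=
  (hT.bijOn hμ).surjOn hk

theorem IsStdYT.row_strict (hT : IsStdYT n T) (hμ : μ.card = n) {r c c' : ℕ} (hc : c < c')
    (h : (r, c') ∈ μ) : T r c < T r c' := by
  refine (T.row_weak hc h).lt_of_ne fun heq => hc.ne ?_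
  exact (Prod.mk.inj (hT.cell_eq hμ (μ.up_left_mem le_rfl hc.le h) h heq)).2

theorem IsStdYT.entry_lt_entry_iff (hT : IsStdYT n T) (hμ : μ.card = n) {r c c₀ : ℕ}
    (h₀ : (r, c₀) ∈ μ) : (r, c) ∈ μ ∧ T r c < T r c₀ ↔ c < c₀ := by
  refine ⟨fun ⟨h, hlt⟩ => lt_of_not_ge fun hge => ?_, fun hlt => ?_⟩
  · exact hlt.not_ge (T.row_weak_of_le hge h)
  · exact ⟨μ.up_left_mem le_rfl hlt.le h₀, hT.row_strict hμ hlt h₀⟩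

theorem IsStdYT.entry_le_entry_iff (hT : IsStdYT n T) (hμ : μ.card = n) {r c c₀ : ℕ}
    (h₀ : (r, c₀) ∈ μ) : (r, c) ∈ μ ∧ T r c ≤ T r c₀ ↔ c ≤ c₀ := by
  refine ⟨fun ⟨h, hle⟩ => le_of_not_gt fun hlt => ?_, fun hle => ?_⟩
  · exact hle.not_gt (hT.row_strict hμ hlt h)
  · exact ⟨μ.up_left_mem le_rfl hle h₀, T.row_weak_of_le hle h₀⟩

theorem IsStdYT.mem_sytDes_iff (hT : IsStdYT n T) (hμ : μ.card = n) {x y : ℕ × ℕ} (hx : x ∈ μ)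
    (hy : y ∈ μ) (hxy : T y.1 y.2 = T x.1 x.2 + 1) : T x.1 x.2 ∈ sytDes n T ↔ x.1 < y.1 := by
  have hx' := Finset.mem_Icc.1 (hT.entry_mem hμ hx)
  have hy' := Finset.mem_Icc.1 (hT.entry_mem hμ hy)
  rw [sytDes, Finset.mem_filter, Finset.mem_Icc]
  refine ⟨?_, fun h => ⟨by omega, x, hx, y, hy, rfl, hxy, h⟩⟩
  rintro ⟨-, u, hu, v, hv, hux, hvx, huv⟩
  rwa [hT.cell_eq hμ hu hx hux, hT.cell_eq hμ hv hy (hvx.trans hxy.symm)] at huv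

theorem IsStdYT.exists_cells_of_mem_Icc (hT : IsStdYT n T) (hμ : μ.card = n) {k : ℕ}
    (hk : k ∈ Finset.Icc 1 (n - 1)) :
    ∃ x ∈ μ, ∃ y ∈ μ, T x.1 x.2 = k ∧ T y.1 y.2 = k + 1 := by
  obtain ⟨h1, hn⟩ := Finset.mem_Icc.1 hk
  have hk : k ∈ Finset.Icc 1 n := Finset.mem_Icc.2 ⟨h1, by omega⟩
  have hk' : k + 1 ∈ Finset.Icc 1 n := Finset.mem_Icc.2 ⟨by omega, by omega⟩
  obtain ⟨x, hx, hxk⟩ := hT.exists_cell hμ hk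
  obtain ⟨y, hy, hyk⟩ := hT.exists_cell hμ hk'
  exact ⟨x, hx, y, hy, hxk, hyk⟩

end StandardTableaux

/-- The lattice word of a standard tableau `T`: its letter in position `k`, counted from `0`, is one
more than the row of the entry `k + 1` of `T`. -/
def latticeWord {μ : YoungDiagram} (T : SemistandardYoungTableau μ) (k : ℕ) : ℕ :=
  if h : ∃ x ∈ μ, T x.1 x.2 = k + 1 then h.choose.1 + 1 else 0

/-- The relation between a standard tableau `T` and its lattice word `q`: for every `m`, the cells
of `T` with entries at most `m` are those filled by the first `m` letters of `q`. -/
def IsLatticeWordOf {μ : YoungDiagram} (T : SemistandardYoungTableau μ) (q : ℕ → ℕ) : Prop :=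
  ∀ r c m, c < letterCount q m r ↔ (r, c) ∈ μ ∧ T r c ≤ m

section LatticeWord

variable {μ : YoungDiagram} {n : ℕ} {T T' : SemistandardYoungTableau μ} {q q' : ℕ → ℕ}

theorem IsStdYT.latticeWord_eq_succ_iff (hT : IsStdYT n T) (hμ : μ.card = n) {k r : ℕ} :
    latticeWord T k = r + 1 ↔ ∃ c, (r, c) ∈ μ ∧ T r c = k + 1 := by
  rw [latticeWord]
  split_ifs with h
  · obtain ⟨hx, hxk⟩ := h.choose_spec
    rw [Nat.succ_inj]
    constructor
    · rintro rfl
      exact ⟨_, hx, hxk⟩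
    · rintro ⟨c, hc, hck⟩
      rw [hT.cell_eq hμ hx hc (hxk.trans hck.symm)]
  · exact iff_of_false id fun ⟨c, hc, hck⟩ => h ⟨(r, c), hc, hck⟩

theorem IsStdYT.isLatticeWordOf (hT : IsStdYT n T) (hμ : μ.card = n) :
    IsLatticeWordOf T (latticeWord T) := by
  intro r c m
  induction m generalizing c with
  | zero =>
    exact iff_of_false (Nat.not_lt_zero c) fun ⟨h, hle⟩ =>
      (Finset.mem_Icc.1 (hT.entry_mem hμ h)).1.not_gt (Nat.lt_succ_of_le hle)
  | succ m ih =>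
    rw [letterCount_succ]
    split_ifs with hm
    · obtain ⟨c₀, hc₀, hTc₀⟩ := (hT.latticeWord_eq_succ_iff hμ).1 hm
      have count_eq : letterCount (latticeWord T) m r = c₀ := eq_of_forall_lt_iff fun c => by
        rw [ih, ← hT.entry_lt_entry_iff hμ hc₀, hTc₀, Nat.lt_succ_iff]
      rw [count_eq, Nat.lt_succ_iff, ← hT.entry_le_entry_iff hμ hc₀, hTc₀]
    · have entry_ne (h : (r, c) ∈ μ) : T r c ≠ m + 1 := fun hTc =>
        hm ((hT.latticeWord_eq_succ_iff hμ).2 ⟨c, h, hTc⟩)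
      rw [add_zero, ih]
      exact and_congr_right fun h => ⟨Nat.le_succ_of_le, fun hle =>
        Nat.lt_succ_iff.1 (hle.lt_of_ne (entry_ne h))⟩

theorem IsLatticeWordOf.word_unique (h : IsLatticeWordOf T q) (h' : IsLatticeWordOf T q') :
    q = q' :=
  eq_of_letterCount_eq fun m r => eq_of_forall_lt_iff fun c => (h r c m).trans (h' r c m).symm

theorem IsLatticeWordOf.tableau_unique (h : IsLatticeWordOf T q) (h' : IsLatticeWordOf T' q) :
    T = T' := by
  ext r c
  by_cases hc : (r, c) ∈ μ
  · refine eq_of_forall_ge_iff fun m => ?_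
    simpa only [hc, true_and] using (h r c m).symm.trans (h' r c m)
  · rw [T.zeros hc, T'.zeros hc]

theorem IsLatticeWordOf.entry_eq_succ_iff (h : IsLatticeWordOf T q) {r c k : ℕ} :
    (r, c) ∈ μ ∧ T r c = k + 1 ↔ q k = r + 1 ∧ c = letterCount q k r := by
  have hk := h r c k
  have hk' := h r c (k + 1)
  rw [letterCount_succ] at hk'
  grind

theorem IsLatticeWordOf.eq_succ_of_entry (h : IsLatticeWordOf T q) {x : ℕ × ℕ} (hx : x ∈ μ)
    {k : ℕ} (hxk : T x.1 x.2 = k + 1) : q k = x.1 + 1 :=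
  (h.entry_eq_succ_iff.1 ⟨hx, hxk⟩).1

theorem IsLatticeWordOf.isYamanouchi (h : IsLatticeWordOf T q) (hT : IsStdYT n T)
    (hμ : μ.card = n) : IsYamanouchi n q := by
  refine ⟨fun k => ⟨fun hk => ?_, fun hk => ?_⟩, fun m r r' hr => le_of_forall_lt fun c hc => ?_⟩
  · obtain ⟨r, hr⟩ := Nat.exists_eq_succ_of_ne_zero hk
    obtain ⟨hc, hck⟩ := h.entry_eq_succ_iff.2 ⟨hr, rfl⟩
    have := Finset.mem_Icc.1 (hT.entry_mem hμ hc)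
    omega
  · obtain ⟨x, hx, hxk⟩ := hT.exists_cell hμ (k := k + 1) (Finset.mem_Icc.2 ⟨by omega, hk⟩)
    rw [h.eq_succ_of_entry hx hxk]
    exact Nat.succ_ne_zero _
  · obtain ⟨hc, hcm⟩ := (h r' c m).1 hc
    exact (h r c m).2 ⟨μ.up_left_mem hr le_rfl hc, (T.col_weak hr hc).trans hcm⟩

theorem IsLatticeWordOf.letterCount_eq_rowLen (h : IsLatticeWordOf T q) (hT : IsStdYT n T)
    (hμ : μ.card = n) : letterCount q n = μ.rowLen := by
  refine funext fun r => eq_of_forall_lt_iff fun c => ?_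
  rw [h, ← YoungDiagram.mem_iff_lt_rowLen]
  exact and_iff_left_of_imp fun hc => (Finset.mem_Icc.1 (hT.entry_mem hμ hc)).2

theorem IsLatticeWordOf.wordDes_eq (h : IsLatticeWordOf T q) (hT : IsStdYT n T)
    (hμ : μ.card = n) : wordDes n q = sytDes n T := by
  have mem_iff {k : ℕ} (hk : k ∈ Finset.Icc 1 (n - 1)) : q (k - 1) < q k ↔ k ∈ sytDes n T := by
    obtain ⟨x, hx, y, hy, hxk, hyk⟩ := hT.exists_cells_of_mem_Icc hμ hk
    obtain ⟨k, rfl⟩ := Nat.exists_eq_add_of_le' (Finset.mem_Icc.1 hk).1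
    have := hT.mem_sytDes_iff hμ hx hy (by rw [hxk, hyk])
    rw [hxk] at this
    rw [this, add_tsub_cancel_right, h.eq_succ_of_entry hx hxk, h.eq_succ_of_entry hy hyk,
      Nat.succ_lt_succ_iff]
  ext k
  rw [wordDes, Finset.mem_filter]
  refine ⟨fun ⟨hk, hlt⟩ => (mem_iff hk).1 hlt, fun hk => ?_⟩
  have hk' := Finset.mem_of_mem_filter k hk
  exact ⟨hk', (mem_iff hk').2 hk⟩

/-- The number of letters of the word `q` up to and including the one that fills the cell `(r, c)`.
It is `0`, the infimum of the empty set, if the cell is never filled. -/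
def fillTime (q : ℕ → ℕ) (r c : ℕ) : ℕ := sInf {m | c < letterCount q m r}

theorem fillTime_le {m r c : ℕ} (h : c < letterCount q m r) : fillTime q r c ≤ m := Nat.sInf_le h

theorem lt_letterCount_fillTime {m r c : ℕ} (h : c < letterCount q m r) :
    c < letterCount q (fillTime q r c) r :=
  Nat.sInf_mem (s := {m | c < letterCount q m r}) ⟨m, h⟩

theorem IsYamanouchi.fillTime_lt_fillTime (hq : IsYamanouchi n q) {m r r' c : ℕ} (hr : r < r')
    (h : c < letterCount q m r') : fillTime q r c < fillTime q r' c := by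
  have hc := lt_letterCount_fillTime h
  obtain ⟨t, ht⟩ : ∃ t, fillTime q r' c = t + 1 := by
    refine Nat.exists_eq_succ_of_ne_zero fun h0 => ?_
    rw [h0, letterCount_zero] at hc
    exact Nat.not_lt_zero c hc
  have hq_t : q t = r' + 1 := by
    by_contra hne
    rw [ht, letterCount_succ, if_neg hne] at hc
    exact (fillTime_le hc).not_gt (ht ▸ Nat.lt_succ_self t)
  have hct : c < letterCount q t r := by
    have := hq.antitone (t + 1) hr.le
    rw [ht] at hc
    rw [letterCount_succ q t r, hq_t, if_neg (by omega)] at this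
    exact hc.trans_le this
  exact ht ▸ Nat.lt_succ_of_le (fillTime_le hct)

/-- The standard tableau of shape `μ` encoded by a Yamanouchi word `q` of content `μ`. -/
def IsYamanouchi.tableau (hq : IsYamanouchi n q) (hqμ : letterCount q n = μ.rowLen) :
    SemistandardYoungTableau μ where
  entry := fillTime q
  row_weak' {r c c'} hc h := by
    rw [YoungDiagram.mem_iff_lt_rowLen, ← hqμ] at h
    exact fillTime_le (hc.trans (lt_letterCount_fillTime h))
  col_strict' {r r' c} hr h := by
    rw [YoungDiagram.mem_iff_lt_rowLen, ← hqμ] at h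
    exact hq.fillTime_lt_fillTime hr h
  zeros' {r c} h := by
    rw [YoungDiagram.mem_iff_lt_rowLen, ← hqμ] at h
    have hempty : {m | c < letterCount q m r} = ∅ :=
      Set.eq_empty_of_forall_notMem fun m hm => h (hm.trans_le (hq.letterCount_le m r))
    rw [fillTime, hempty, Nat.sInf_empty]

theorem IsYamanouchi.isLatticeWordOf_tableau (hq : IsYamanouchi n q)
    (hqμ : letterCount q n = μ.rowLen) : IsLatticeWordOf (hq.tableau hqμ) q := by
  intro r c m
  rw [YoungDiagram.mem_iff_lt_rowLen, ← hqμ]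
  exact ⟨fun h => ⟨h.trans_le (hq.letterCount_le m r), fillTime_le h⟩,
    fun ⟨h, hm⟩ => (lt_letterCount_fillTime h).trans_le (letterCount_mono q r hm)⟩

theorem IsLatticeWordOf.isStdYT (h : IsLatticeWordOf T q) (hq : IsYamanouchi n q)
    (hμ : μ.card = n) : IsStdYT n T := by
  refine (isStdYT_iff_surjOn hμ).2 fun k hk => ?_
  obtain ⟨h1, hn⟩ := Finset.mem_Icc.1 hk
  obtain ⟨k, rfl⟩ := Nat.exists_eq_add_of_le' h1
  obtain ⟨r, hr⟩ := Nat.exists_eq_succ_of_ne_zero ((hq.support k).2 hn)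
  exact ⟨(r, letterCount q k r), h.entry_eq_succ_iff.2 ⟨hr, rfl⟩⟩

theorem card_yamanouchi_eq_dCoef (hμ : μ.card = n) (I : Finset ℕ) :
    Nat.card {q // IsYamanouchi n q ∧ letterCount q n = μ.rowLen ∧ wordDes n q = I} =
      dCoef μ n I := by
  have mem {T : SemistandardYoungTableau μ} (hT : IsStdYT n T) :
      IsYamanouchi n (latticeWord T) ∧ letterCount (latticeWord T) n = μ.rowLen ∧
        wordDes n (latticeWord T) = sytDes n T :=
    have h := hT.isLatticeWordOf hμ
    ⟨h.isYamanouchi hT hμ, h.letterCount_eq_rowLen hT hμ, h.wordDes_eq hT hμ⟩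
  let word (T : {T : SemistandardYoungTableau μ // IsStdYT n T ∧ sytDes n T = I}) :
      {q // IsYamanouchi n q ∧ letterCount q n = μ.rowLen ∧ wordDes n q = I} :=
    ⟨latticeWord T.1, (mem T.2.1).imp_right (And.imp_right fun h => h.trans T.2.2)⟩
  refine (Nat.card_eq_of_bijective word ⟨?_, ?_⟩).symm
  · rintro ⟨T, hT, _⟩ ⟨T', hT', _⟩ h
    have hTT' : latticeWord T = latticeWord T' := congrArg Subtype.val h
    have hq := hT'.isLatticeWordOf hμ
    exact Subtype.ext ((hT.isLatticeWordOf hμ).tableau_unique (hTT' ▸ hq))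
  · rintro ⟨q, hq, hqμ, rfl⟩
    have hTq := hq.isLatticeWordOf_tableau hqμ
    have hT := hTq.isStdYT hq hμ
    exact ⟨⟨_, hT, (hTq.wordDes_eq hT hμ).symm⟩,
      Subtype.ext ((hT.isLatticeWordOf hμ).word_unique hTq)⟩

end LatticeWord

/-! ### Transposition -/

section Transposition

variable {μ ν : YoungDiagram} {n : ℕ} {T : SemistandardYoungTableau μ}

theorem card_transpose (μ : YoungDiagram) : μ.transpose.card = μ.card := Finset.card_map _

/-- The standard tableau obtained by reflecting `T` in the main diagonal. Its shape is given as any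
`ν` equal to `μ.transpose`, so that reflecting twice returns to shape `μ` without a cast. -/
def IsStdYT.reflect (hT : IsStdYT n T) (hμ : μ.card = n) (hν : μ.transpose = ν) :
    SemistandardYoungTableau ν where
  entry r c := T c r
  row_weak' hc h := (T.col_strict hc (YoungDiagram.mem_transpose.1 (hν ▸ h))).le
  col_strict' hr h := hT.row_strict hμ hr (YoungDiagram.mem_transpose.1 (hν ▸ h))
  zeros' h := T.zeros fun hc => h (hν ▸ YoungDiagram.mem_transpose.2 hc)

theorem IsStdYT.isStdYT_reflect (hT : IsStdYT n T) (hμ : μ.card = n) (hν : μ.transpose = ν) :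
    IsStdYT n (hT.reflect hμ hν) := by
  refine (isStdYT_iff_surjOn (hν ▸ (card_transpose μ).trans hμ)).2 fun k hk => ?_
  obtain ⟨x, hx, hxk⟩ := hT.exists_cell hμ hk
  exact ⟨x.swap, hν ▸ YoungDiagram.mem_transpose.2 hx, hxk⟩

theorem IsStdYT.row_lt_iff_col_le (hT : IsStdYT n T) (hμ : μ.card = n) {x y : ℕ × ℕ} (hx : x ∈ μ)
    (hy : y ∈ μ) (hxy : T y.1 y.2 = T x.1 x.2 + 1) : x.1 < y.1 ↔ y.2 ≤ x.2 := by
  refine ⟨fun hrow => le_of_not_gt fun hcol => ?_, fun hcol => lt_of_not_ge fun hrow => ?_⟩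
  · have corner : (x.1, y.2) ∈ μ := μ.up_left_mem hrow.le le_rfl hy
    have := hT.row_strict hμ hcol corner
    have := T.col_strict hrow hy
    omega
  · have corner : (y.1, x.2) ∈ μ := μ.up_left_mem hrow le_rfl hx
    have := T.row_weak_of_le hcol corner
    have := T.col_weak hrow hx
    omega

theorem IsStdYT.mem_sytDes_reflect_iff (hT : IsStdYT n T) (hμ : μ.card = n)
    (hν : μ.transpose = ν) {k : ℕ} (hk : k ∈ Finset.Icc 1 (n - 1)) :
    k ∈ sytDes n (hT.reflect hμ hν) ↔ k ∉ sytDes n T := by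
  obtain ⟨x, hx, y, hy, rfl, hxy⟩ := hT.exists_cells_of_mem_Icc hμ hk
  have mem_swap {z : ℕ × ℕ} (hz : z ∈ μ) : z.swap ∈ ν := hν ▸ YoungDiagram.mem_transpose.2 hz
  have hνn : ν.card = n := hν ▸ (card_transpose μ).trans hμ
  have := (hT.isStdYT_reflect hμ hν).mem_sytDes_iff hνn (mem_swap hx) (mem_swap hy) hxy
  rw [hT.mem_sytDes_iff hμ hx hy hxy, hT.row_lt_iff_col_le hμ hx hy hxy, not_le]
  exact this

theorem IsStdYT.sytDes_reflect (hT : IsStdYT n T) (hμ : μ.card = n) (hν : μ.transpose = ν) :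
    sytDes n (hT.reflect hμ hν) = Finset.Icc 1 (n - 1) ∆ sytDes n T := by
  ext k
  have := hT.mem_sytDes_reflect_iff hμ hν (k := k)
  have sub {ν : YoungDiagram} (S : SemistandardYoungTableau ν) :
      k ∈ sytDes n S → k ∈ Finset.Icc 1 (n - 1) := Finset.mem_of_mem_filter k
  have := sub T
  have := sub (hT.reflect hμ hν)
  rw [Finset.mem_symmDiff]
  tauto

theorem dCoef_transpose (hμ : μ.card = n) (I : Finset ℕ) :
    dCoef μ.transpose n I = dCoef μ n (Finset.Icc 1 (n - 1) ∆ I) :=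
  have hμ' : μ.transpose.card = n := (card_transpose μ).trans hμ
  have hμμ : μ.transpose.transpose = μ := YoungDiagram.transpose_transpose μ
  Nat.card_congr
    { toFun S := ⟨S.2.1.reflect hμ' hμμ, S.2.1.isStdYT_reflect hμ' hμμ, by
        rw [S.2.1.sytDes_reflect, S.2.2]⟩
      invFun T := ⟨T.2.1.reflect hμ rfl, T.2.1.isStdYT_reflect hμ rfl, by
        rw [T.2.1.sytDes_reflect, T.2.2, symmDiff_symmDiff_cancel_left]⟩
      left_inv _ := rfl
      right_inv _ := rfl }

end Transposition

/-! ### Partitions and Young diagrams -/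

section Partitions

variable {n : ℕ}

theorem sum_countP_lt {s : Multiset ℕ} (h : ∀ a ∈ s, a ≤ n) :
    ∑ c ∈ Finset.range n, s.countP (c < ·) = s.sum := by
  induction s using Multiset.induction_on with
  | empty => simp
  | cons a s ih =>
    obtain ⟨ha, hs⟩ := Multiset.forall_mem_cons.1 h
    have columns : (Finset.range n).filter (· < a) = Finset.range a := by
      ext c
      simp only [Finset.mem_filter, Finset.mem_range]
      omega
    simp only [Multiset.countP_cons, Finset.sum_add_distrib, ih hs, ← Finset.card_filter, columns,
      Finset.card_range, Multiset.sum_cons, add_comm]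

theorem countP_lt_eq_add_count (s : Multiset ℕ) (c : ℕ) :
    s.countP (c < ·) = s.countP (c + 1 < ·) + s.count (c + 1) := by
  induction s using Multiset.induction_on with
  | empty => simp
  | cons a s ih =>
    simp only [Multiset.countP_cons, Multiset.count_cons, ih]
    split_ifs <;> omega

theorem countP_parts_le (p : n.Partition) (c : ℕ) : p.parts.countP (c < ·) ≤ n :=
  calc p.parts.countP (c < ·) ≤ p.parts.card := Multiset.countP_le_card _ _
    _ = p.parts.card • 1 := (nsmul_one _).symm
    _ ≤ p.parts.sum := Multiset.card_nsmul_le_sum fun _ => p.parts_pos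
    _ = n := p.parts_sum

theorem mem_toYD {p : n.Partition} {r c : ℕ} :
    (r, c) ∈ toYD p ↔ r < p.parts.countP (c < ·) := by
  rw [← YoungDiagram.mem_cells, toYD, Finset.mem_filter, Finset.mem_product, Finset.mem_range,
    Finset.mem_range, ← Multiset.countP_eq_card_filter]
  refine and_iff_right_of_imp fun h => ⟨h.trans_le (countP_parts_le p c), ?_⟩
  obtain ⟨a, ha, hca⟩ := Multiset.countP_pos.1 (Nat.zero_lt_of_lt h)
  exact hca.trans_le (Nat.Partition.le_of_mem_parts ha)

theorem colLen_toYD (p : n.Partition) (c : ℕ) : (toYD p).colLen c = p.parts.countP (c < ·) :=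
  eq_of_forall_lt_iff fun r => by rw [← YoungDiagram.mem_iff_lt_colLen, mem_toYD]

theorem card_eq_sum_rowLen {μ : YoungDiagram} {m : ℕ} (hm : μ.colLen 0 ≤ m) :
    μ.card = ∑ r ∈ Finset.range m, μ.rowLen r := by
  have row_mem : ∀ x ∈ μ.cells, x.1 ∈ Finset.range m := fun x hx => by
    have first_col : (x.1, 0) ∈ μ := μ.up_left_mem le_rfl x.2.zero_le hx
    exact Finset.mem_range.2 ((YoungDiagram.mem_iff_lt_colLen.1 first_col).trans_le hm)
  simp only [YoungDiagram.rowLen_eq_card]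
  exact Finset.card_eq_sum_card_fiberwise row_mem

theorem countP_rowLens (μ : YoungDiagram) (c : ℕ) :
    (μ.rowLens : Multiset ℕ).countP (c < ·) = μ.colLen c := by
  have long_rows : (Finset.range (μ.colLen 0)).filter (c < μ.rowLen ·) =
      Finset.range (μ.colLen c) := by
    ext r
    rw [Finset.mem_filter, Finset.mem_range, Finset.mem_range, ← YoungDiagram.mem_iff_lt_rowLen,
      ← YoungDiagram.mem_iff_lt_colLen, ← YoungDiagram.mem_iff_lt_colLen]
    exact and_iff_right_of_imp (μ.up_left_mem le_rfl c.zero_le)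
  calc (μ.rowLens : Multiset ℕ).countP (c < ·)
      = ((Multiset.range (μ.colLen 0)).map μ.rowLen).countP (c < ·) := rfl
    _ = ((Finset.range (μ.colLen 0)).filter (c < μ.rowLen ·)).card := Multiset.countP_map ..
    _ = μ.colLen c := by rw [long_rows, Finset.card_range]

theorem card_toYD (p : n.Partition) : (toYD p).card = n := by
  have rowLen_le : (toYD p).rowLen 0 ≤ n := le_of_not_gt fun h => by
    have := Finset.mem_filter.1 (YoungDiagram.mem_iff_lt_rowLen.2 h)
    exact (Finset.mem_range.1 (Finset.mem_product.1 this.1).2).false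
  rw [← YoungDiagram.colLen_transpose] at rowLen_le
  rw [← card_transpose, card_eq_sum_rowLen rowLen_le]
  simp only [YoungDiagram.rowLen_transpose, colLen_toYD]
  rw [sum_countP_lt fun _ => Nat.Partition.le_of_mem_parts, p.parts_sum]

theorem toYD_injective : Function.Injective (toYD (n := n)) := by
  intro p p' h
  have countP_eq (c : ℕ) : p.parts.countP (c < ·) = p'.parts.countP (c < ·) := by
    rw [← colLen_toYD, h, colLen_toYD]
  ext a
  rcases a with _ | c
  · have count_zero (p : n.Partition) : p.parts.count 0 = 0 :=
      Multiset.count_eq_zero_of_notMem fun h => (p.parts_pos h).false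
    rw [count_zero, count_zero]
  · have count_eq := countP_lt_eq_add_count p.parts c
    rw [countP_eq, countP_eq, countP_lt_eq_add_count p'.parts c] at count_eq
    exact (Nat.add_left_cancel count_eq).symm

theorem exists_toYD_eq {μ : YoungDiagram} (hμ : μ.card = n) : ∃ p : n.Partition, toYD p = μ := by
  have sum_rowLens : (μ.rowLens : Multiset ℕ).sum = n := (card_eq_sum_rowLen le_rfl).symm.trans hμ
  refine ⟨⟨μ.rowLens, fun {a} ha => μ.pos_of_mem_rowLens a ha, sum_rowLens⟩, ?_⟩
  ext ⟨r, c⟩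
  rw [YoungDiagram.mem_cells, YoungDiagram.mem_cells, mem_toYD, countP_rowLens,
    YoungDiagram.mem_iff_lt_colLen]

theorem sum_toYD_transpose {M : Type*} [AddCommMonoid M] (F : YoungDiagram → M) :
    ∑ p : n.Partition, F (toYD p).transpose = ∑ p : n.Partition, F (toYD p) := by
  choose t ht using fun p : n.Partition =>
    exists_toYD_eq ((card_transpose (toYD p)).trans (card_toYD p))
  have involutive : Function.Involutive t := fun p =>
    toYD_injective (by rw [ht, ht, YoungDiagram.transpose_transpose])
  simp only [← ht]
  exact Equiv.sum_comp involutive.toPerm fun p => F (toYD p)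

end Partitions

/-! ### Permutations with prescribed descents -/

section Factorizations

variable {μ : YoungDiagram} {n : ℕ}

theorem rowLen_injective : Function.Injective YoungDiagram.rowLen := fun μ ν h => by
  ext ⟨r, c⟩
  rw [YoungDiagram.mem_cells, YoungDiagram.mem_cells, YoungDiagram.mem_iff_lt_rowLen,
    YoungDiagram.mem_iff_lt_rowLen, h]

theorem card_perm_of_shape (hμ : μ.card = n) (I J : Finset ℕ) :
    Nat.card {ρ : Equiv.Perm (Fin n) //
        letterCount (recordingWord ρ) n = μ.rowLen ∧ permDes ρ = I ∧ permDes ρ⁻¹ = J} =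
      dCoef μ n I * dCoef μ n J := by
  rw [← card_yamanouchi_eq_dCoef hμ I, ← card_yamanouchi_eq_dCoef hμ J, ← Nat.card_prod]
  let words (ρ : {ρ : Equiv.Perm (Fin n) //
        letterCount (recordingWord ρ) n = μ.rowLen ∧ permDes ρ = I ∧ permDes ρ⁻¹ = J}) :
      {q // IsYamanouchi n q ∧ letterCount q n = μ.rowLen ∧ wordDes n q = I} ×
        {q // IsYamanouchi n q ∧ letterCount q n = μ.rowLen ∧ wordDes n q = J} :=
    (⟨recordingWord ρ.1, isYamanouchi_recordingWord _, ρ.2.1,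
        (wordDes_recordingWord _).trans ρ.2.2.1⟩,
      ⟨recordingWord ρ.1⁻¹, isYamanouchi_recordingWord _,
        (letterCount_recordingWord_inv _).trans ρ.2.1, (wordDes_recordingWord _).trans ρ.2.2.2⟩)
  refine Nat.card_eq_of_bijective words ⟨fun ρ ρ' h => ?_, ?_⟩
  · obtain ⟨hq, hp⟩ := Prod.mk.inj h
    exact Subtype.ext (eq_of_recordingWord_eq (congrArg Subtype.val hq) (congrArg Subtype.val hp))
  · rintro ⟨⟨q, hq, hqμ, rfl⟩, ⟨p, hp, hpμ, rfl⟩⟩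
    obtain ⟨ρ, rfl, rfl⟩ := exists_recordingWord_eq hq hp (hqμ.trans hpμ.symm)
    exact ⟨⟨ρ, hqμ, (wordDes_recordingWord ρ).symm, (wordDes_recordingWord ρ⁻¹).symm⟩, rfl⟩

theorem card_permDes_permDes_inv (n : ℕ) (I J : Finset ℕ) :
    Nat.card {ρ : Equiv.Perm (Fin n) // permDes ρ = I ∧ permDes ρ⁻¹ = J} =
      ∑ p : n.Partition, dCoef (toYD p) n I * dCoef (toYD p) n J := by
  have exists_shape (ρ : Equiv.Perm (Fin n)) :
      ∃ p : n.Partition, letterCount (recordingWord ρ) n = (toYD p).rowLen := by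
    obtain ⟨μ, hμ, hρ⟩ := (isYamanouchi_recordingWord ρ).exists_rowLen_eq
    obtain ⟨p, rfl⟩ := exists_toYD_eq hμ
    exact ⟨p, hρ⟩
  choose shape hshape using exists_shape
  have shape_eq_iff (ρ : Equiv.Perm (Fin n)) (p : n.Partition) :
      letterCount (recordingWord ρ) n = (toYD p).rowLen ↔ shape ρ = p := by
    rw [hshape, rowLen_injective.eq_iff, toYD_injective.eq_iff]
  simp only [← card_perm_of_shape (card_toYD _), shape_eq_iff, Nat.card_eq_fintype_card,
    Fintype.card_subtype]
  rw [Finset.card_eq_sum_card_fiberwise (f := shape) (t := Finset.univ) fun _ _ =>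
    Finset.mem_coe.2 (Finset.mem_univ _)]
  simp only [Finset.filter_filter, and_comm]

theorem strictAnti_of_permDes_eq_Icc {π : Equiv.Perm (Fin n)}
    (hπ : permDes π = Finset.Icc 1 (n - 1)) : StrictAnti π := by
  cases n with
  | zero => exact Subsingleton.strictAnti _
  | succ m =>
    refine Fin.strictAnti_iff_succ_lt.2 fun i => ?_
    have hi : (i : ℕ) + 1 ∈ permDes π := hπ ▸ Finset.mem_Icc.2 ⟨by omega, by omega⟩
    exact (Finset.mem_filter.1 hi).2.2

theorem permDes_mul_of_strictAnti {π : Equiv.Perm (Fin n)} (hπ : StrictAnti π)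
    (ρ : Equiv.Perm (Fin n)) : permDes (π * ρ) = Finset.Icc 1 (n - 1) ∆ permDes ρ := by
  ext k
  simp only [permDes, Finset.mem_symmDiff, Finset.mem_filter, Equiv.Perm.mul_apply, hπ.lt_iff_gt]
  by_cases hk : k ∈ Finset.Icc 1 (n - 1)
  · obtain ⟨h1, hn⟩ := Finset.mem_Icc.1 hk
    have hkn : k < n := by omega
    have hne : ρ ⟨k - 1, by omega⟩ ≠ ρ ⟨k, hkn⟩ := ρ.injective.ne (by simp; omega)
    simp only [hk, hkn, exists_true_left, true_and, not_true, and_false, or_false, not_lt]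
    exact hne.le_iff_lt.symm
  · simp only [hk, false_and, or_self]

theorem card_factorizations_eq {G : Type*} [Group G] (g : G) (P Q : G → Prop) :
    Nat.card {st : G × G // st.1 * st.2 = g ∧ P st.1 ∧ Q st.2} =
      Nat.card {x : G // P (g * x) ∧ Q x⁻¹} := by
  let factors (x : {x : G // P (g * x) ∧ Q x⁻¹}) :
      {st : G × G // st.1 * st.2 = g ∧ P st.1 ∧ Q st.2} :=
    ⟨(g * x, x.1⁻¹), mul_inv_cancel_right _ _, x.2⟩
  refine (Nat.card_eq_of_bijective factors ⟨fun x y h => ?_, ?_⟩).symm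
  · exact Subtype.ext (inv_injective (congrArg (·.1.2) h))
  · rintro ⟨⟨s, t⟩, rfl, hs, ht⟩
    exact ⟨⟨t⁻¹, by rwa [mul_inv_cancel_right], by rwa [inv_inv]⟩, by simp [factors]⟩

end Factorizations

/-- The number of pairs `(σ, τ)` of permutations of `S_n` with `στ = π₀`
(`π₀` a fixed permutation with full descent set `{1, ..., n-1}`), `Des(σ) = I` and
`Des(τ) = J` is `Σ_{λ ⊢ n} d_{λ,I} d_{λ',J}` where `λ'` is the conjugate. -/
theorem stmt7 (n : ℕ) (hn : 1 ≤ n) (I J : Finset ℕ)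
    (π₀ : Equiv.Perm (Fin n)) (hπ₀ : permDes π₀ = Finset.Icc 1 (n - 1)) :
    Nat.card {st : Equiv.Perm (Fin n) × Equiv.Perm (Fin n) //
        st.1 * st.2 = π₀ ∧ permDes st.1 = I ∧ permDes st.2 = J} =
      ∑ p : n.Partition, dCoef (toYD p) n I * dCoef (toYD p).transpose n J := by
  have des_mul (ρ : Equiv.Perm (Fin n)) :
      permDes (π₀ * ρ) = I ↔ permDes ρ = Finset.Icc 1 (n - 1) ∆ I := by
    rw [permDes_mul_of_strictAnti (strictAnti_of_permDes_eq_Icc hπ₀)]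
    exact (symmDiff_right_involutive _).eq_iff
  calc
    _ = Nat.card {ρ : Equiv.Perm (Fin n) // permDes (π₀ * ρ) = I ∧ permDes ρ⁻¹ = J} :=
      card_factorizations_eq π₀ (permDes · = I) (permDes · = J)
    _ = Nat.card {ρ : Equiv.Perm (Fin n) //
          permDes ρ = Finset.Icc 1 (n - 1) ∆ I ∧ permDes ρ⁻¹ = J} := by simp only [des_mul]
    _ = ∑ p : n.Partition, dCoef (toYD p) n (Finset.Icc 1 (n - 1) ∆ I) * dCoef (toYD p) n J :=
      card_permDes_permDes_inv n _ J
    _ = ∑ p : n.Partition, dCoef (toYD p).transpose n I * dCoef (toYD p) n J := by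
      simp only [dCoef_transpose (card_toYD _)]
    _ = ∑ p : n.Partition, dCoef (toYD p) n I * dCoef (toYD p).transpose n J := by
      rw [← sum_toYD_transpose fun μ => dCoef μ.transpose n I * dCoef μ n J]
      simp only [YoungDiagram.transpose_transpose]
end
end

section
/- For n ≥ 1 and subsets I, J, K of {1,...,n-1}, the number of triples of permutations (σ₁, σ₂, σ₃) in S_n with σ₁σ₂σ₃ = id, Des(σ₁) = I, Des(σ₂) = J, Des(σ₃) = K equals Σ_{λ,μ,ν ⊢ n} g(λ,μ,ν) · d_{λ,I} · d_{μ,J} · d_{ν,K}. -/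
open scoped Classical

noncomputable section

/-- The Schur function of shape `μ`, in variables `x_0, x_1, x_2, ...`. -/
def schur (μ : YoungDiagram) : MvPowerSeries ℕ ℂ :=
  fun d => (Nat.card {T : SemistandardYoungTableau μ // ∀ j, ssytWeight T j = d j} : ℂ)

/-- The power sum symmetric function `p_k = Σ_i x_i^k`. -/
def psum (k : ℕ) : MvPowerSeries ℕ ℂ :=
  fun d => if ∃ i, d = Finsupp.single i k then 1 else 0

/-- Product of power sums over a multiset of integers. -/
def pProd (m : Multiset ℕ) : MvPowerSeries ℕ ℂ := (m.map psum).prod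

/-- The full cycle type of a permutation of `Fin n` (including fixed points as parts `1`). -/
def fullCycleType {n : ℕ} (σ : Equiv.Perm (Fin n)) : Multiset ℕ :=
  σ.cycleType + Multiset.replicate (n - σ.cycleType.sum) 1

/-!
By Möbius inversion over subsets, it suffices to count the triples with `Des(σᵢ) ⊆ Iᵢ`. Let `b_I` be
the weakly increasing word that jumps exactly at the positions in `I`. Then `Des(σ) ⊆ I` if and only
if `σ` is the stable sorting permutation of `b_I ∘ σ⁻¹`. Stably sorting by three words in turn
composes three such permutations, so the triples with product `1` correspond to the weakly
increasing words of triples whose components are rearrangements of `b_I`, `b_J` and `b_K`. These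
represent the `S_n`-orbits of triples of rearrangements, which Burnside's lemma counts as
`(1/n!) Σ_σ f_I(σ) f_J(σ) f_K(σ)`, where `f_I(σ)` is the number of rearrangements of `b_I` fixed
by `σ`.

Now `f_I(σ)` is the coefficient of the monomial of `b_I` in `p_{cycletype(σ)} = Σ_λ χ^λ(σ) s_λ`, and
standardization of tableaux shows that the coefficient of this monomial in `s_λ` is
`Σ_{I' ⊆ I} d_{λ,I'}`.
-/

section MoebiusInversion

variable {P : Type*} [PartialOrder P]

theorem eq_of_sum_Iic_eq {R : Type*} [Ring R] [OrderBot P] [LocallyFiniteOrder P] {f g : P → R}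
    (h : ∀ x, ∑ y ∈ Finset.Iic x, f y = ∑ y ∈ Finset.Iic x, g y) : f = g := by
  funext x
  rw [IncidenceAlgebra.moebius_inversion_bot f _ fun _ => rfl,
    IncidenceAlgebra.moebius_inversion_bot g _ fun _ => rfl]
  simp only [h]

theorem card_filter_le_eq_sum_Iic [LocallyFiniteOrderBot P] [DecidableLE P] [DecidableEq P]
    {α : Type*} (s : Finset α) (f : α → P) (x : P) :
    (s.filter (f · ≤ x)).card = ∑ y ∈ Finset.Iic x, (s.filter (f · = y)).card := by
  rw [Finset.card_eq_sum_card_fiberwise (f := f) (t := Finset.Iic x) fun a ha => by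
    simpa using (Finset.mem_filter.1 ha).2]
  refine Finset.sum_congr rfl fun y hy => congrArg Finset.card ?_
  rw [Finset.filter_filter]
  exact Finset.filter_congr fun a _ =>
    ⟨And.right, fun ha => ⟨ha.trans_le (Finset.mem_Iic.1 hy), ha⟩⟩

end MoebiusInversion

section Rearrangements

variable {α β : Type*} [Fintype α]

/-- The words with the same letters as `f`, i.e. the orbit of `f` under permutation of the
positions. -/
def rearrangements (f : α → β) : Finset (α → β) :=
  Finset.univ.image fun σ : Equiv.Perm α => f ∘ σ

theorem mem_rearrangements {f w : α → β} :
    w ∈ rearrangements f ↔ ∃ σ : Equiv.Perm α, f ∘ σ = w := by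
  simp [rearrangements]

theorem comp_perm_mem_rearrangements (f : α → β) (σ : Equiv.Perm α) :
    f ∘ σ ∈ rearrangements f :=
  mem_rearrangements.2 ⟨σ, rfl⟩

theorem comp_mem_rearrangements {f w : α → β} (hw : w ∈ rearrangements f) (σ : Equiv.Perm α) :
    w ∘ σ ∈ rearrangements f := by
  obtain ⟨τ, rfl⟩ := mem_rearrangements.1 hw
  exact comp_perm_mem_rearrangements f (τ * σ)

/-- The multiplicities of the letters of a word, as the exponent vector of a monomial. -/
def content (w : α → β) : β →₀ ℕ := ∑ x, Finsupp.single (w x) 1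

theorem content_apply [DecidableEq β] (w : α → β) (b : β) :
    content w b = (Finset.univ.filter fun x => w x = b).card := by
  simp [content, Finsupp.finsetSum_apply, Finsupp.single_apply]

theorem content_eq_iff_mem_rearrangements {f w : α → β} :
    content w = content f ↔ w ∈ rearrangements f := by
  rw [mem_rearrangements]
  constructor
  · intro h
    have fiberEquiv (b : β) : Nonempty ({x // w x = b} ≃ {x // f x = b}) := by
      rw [← Fintype.card_eq]
      simpa only [Fintype.card_subtype, content_apply] using DFunLike.congr_fun h b
    refine ⟨Equiv.ofFiberEquiv fun b => (fiberEquiv b).some, funext fun x => ?_⟩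
    exact Equiv.ofFiberEquiv_map _ x
  · rintro ⟨σ, rfl⟩
    exact Equiv.sum_comp σ fun x => Finsupp.single (f x) 1

end Rearrangements

section Sorting

variable {n : ℕ} {L M : Type*} [LinearOrder L] [LinearOrder M]

theorem comp_sort_of_mem_rearrangements {b w : Fin n → L} (hb : Monotone b)
    (hw : w ∈ rearrangements b) : w ∘ Tuple.sort w = b := by
  obtain ⟨σ, rfl⟩ := mem_rearrangements.1 hw
  rw [Tuple.comp_perm_comp_sort_eq_comp_sort]
  exact ((Tuple.comp_sort_eq_comp_iff_monotone (σ := 1)).2 hb).symm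

theorem comp_inv_sort_of_mem_rearrangements {b w : Fin n → L} (hb : Monotone b)
    (hw : w ∈ rearrangements b) : b ∘ ⇑(Tuple.sort w)⁻¹ = w := by
  rw [← comp_sort_of_mem_rearrangements hb hw]
  ext
  simp

theorem sort_comp_inv_eq_iff {b : Fin n → L} (hb : Monotone b) {σ : Equiv.Perm (Fin n)} :
    Tuple.sort (b ∘ ⇑σ⁻¹) = σ ↔ ∀ i j, i < j → b i = b j → σ i < σ j := by
  have hcomp : (b ∘ ⇑σ⁻¹) ∘ σ = b := by ext; simp
  rw [eq_comm, Tuple.eq_sort_iff, hcomp, and_iff_right hb]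
  simp

theorem sort_inv_lt_sort_inv_iff {w : Fin n → L} {x y : Fin n} :
    (Tuple.sort w)⁻¹ x < (Tuple.sort w)⁻¹ y ↔ w x < w y ∨ w x = w y ∧ x < y := by
  obtain ⟨hmono, hstable⟩ := Tuple.eq_sort_iff.1 (rfl : Tuple.sort w = Tuple.sort w)
  have hstrict : StrictMono fun i => toLex (w (Tuple.sort w i), Tuple.sort w i) := fun i j hij =>
    Prod.Lex.toLex_lt_toLex.2
      ((hmono hij.le).lt_or_eq.imp_right fun heq => ⟨heq, hstable i j hij heq⟩)
  simpa [Prod.Lex.toLex_lt_toLex] using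
    (hstrict.lt_iff_lt (a := (Tuple.sort w)⁻¹ x) (b := (Tuple.sort w)⁻¹ y)).symm

theorem sort_toLex (g : Fin n → M) (f : Fin n → L) :
    Tuple.sort (fun x => toLex (g x, f x)) =
      Tuple.sort f * Tuple.sort (g ∘ Tuple.sort f) := by
  set p := Tuple.sort f with hp
  set q := Tuple.sort (g ∘ p) with hq
  obtain ⟨hf, hf_stable⟩ := Tuple.eq_sort_iff.1 hp
  obtain ⟨hg, hg_stable⟩ := Tuple.eq_sort_iff.1 hq
  refine (Tuple.eq_sort_iff.2
    ⟨monotone_iff_forall_lt.2 fun i j hij => ?_, fun i j hij h => ?_⟩).symm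
  · refine Prod.Lex.toLex_le_toLex.2 ((hg hij.le).lt_or_eq.imp_right fun heq => ⟨heq, ?_⟩)
    exact hf (hg_stable i j hij heq).le
  · obtain ⟨hgeq, hfeq⟩ := Prod.mk.inj (toLex_inj.1 h)
    exact hf_stable _ _ (hg_stable i j hij hgeq) hfeq

-- A permutation fixes `f` exactly when following it by the sorting permutation of `f` still sorts.
theorem card_monotone_comp_eq_card_comp_eq (f : Fin n → L) :
    (Finset.univ.filter fun σ : Equiv.Perm (Fin n) => Monotone (f ∘ σ)).card =
      (Finset.univ.filter fun σ : Equiv.Perm (Fin n) => f ∘ σ = f).card := by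
  refine Finset.card_equiv (Equiv.mulRight (Tuple.sort f)⁻¹) fun σ => ?_
  simp only [Finset.mem_filter_univ, ← Tuple.comp_sort_eq_comp_iff_monotone]
  exact (Equiv.comp_symm_eq (Tuple.sort f) f (f ∘ σ)).symm

theorem factorial_mul_card_filter_monotone (S : Finset (Fin n → L))
    (hS : ∀ f ∈ S, ∀ σ : Equiv.Perm (Fin n), f ∘ σ ∈ S) :
    n.factorial * (S.filter Monotone).card =
      ∑ σ : Equiv.Perm (Fin n), (S.filter fun f => f ∘ σ = f).card := by
  have card_filter_monotone_comp (σ : Equiv.Perm (Fin n)) :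
      (S.filter fun f => Monotone (f ∘ σ)).card = (S.filter Monotone).card := by
    refine Finset.card_nbij' (· ∘ σ) (· ∘ ⇑σ⁻¹) ?_ ?_ ?_ ?_ <;> intro f hf
    · simp_all
    · have : (f ∘ ⇑σ⁻¹) ∘ σ = f := by ext; simp
      simp_all
    all_goals ext; simp
  calc n.factorial * (S.filter Monotone).card
      = ∑ σ : Equiv.Perm (Fin n), (S.filter fun f => Monotone (f ∘ σ)).card := by
        simp [card_filter_monotone_comp, Fintype.card_perm]
    _ = ∑ f ∈ S, (Finset.univ.filter fun σ : Equiv.Perm (Fin n) => Monotone (f ∘ σ)).card :=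
        Finset.sum_card_bipartiteAbove_eq_sum_card_bipartiteBelow
          fun (σ : Equiv.Perm (Fin n)) (f : Fin n → L) => Monotone (f ∘ σ)
    _ = ∑ f ∈ S, (Finset.univ.filter fun σ : Equiv.Perm (Fin n) => f ∘ σ = f).card := by
        simp only [card_monotone_comp_eq_card_comp_eq]
    _ = ∑ σ : Equiv.Perm (Fin n), (S.filter fun f => f ∘ σ = f).card :=
        (Finset.sum_card_bipartiteAbove_eq_sum_card_bipartiteBelow
          fun (σ : Equiv.Perm (Fin n)) (f : Fin n → L) => f ∘ σ = f).symm

end Sorting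

section Triples

variable {n : ℕ} {L : Type*}

/-- The word of triples formed by three words, compared lexicographically with the third word
most significant. -/
def lexWord (w : (Fin n → L) × (Fin n → L) × (Fin n → L)) (x : Fin n) : L ×ₗ L ×ₗ L :=
  toLex (w.2.2 x, toLex (w.2.1 x, w.1 x))

theorem lexWord_injective :
    Function.Injective (lexWord : (Fin n → L) × (Fin n → L) × (Fin n → L) → _) := by
  intro w v h
  have hx (x : Fin n) : w.2.2 x = v.2.2 x ∧ w.2.1 x = v.2.1 x ∧ w.1 x = v.1 x := by
    simpa [lexWord] using congrFun h x
  exact Prod.ext (funext fun x => (hx x).2.2)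
    (Prod.ext (funext fun x => (hx x).2.1) (funext fun x => (hx x).1))

theorem lexWord_comp (w : (Fin n → L) × (Fin n → L) × (Fin n → L)) (σ : Equiv.Perm (Fin n)) :
    lexWord w ∘ σ = lexWord (w.1 ∘ σ, w.2.1 ∘ σ, w.2.2 ∘ σ) :=
  rfl

/-- The rearrangements of `b` fixed by permuting the positions by `σ`. -/
def fixedRearrangements (b : Fin n → L) (σ : Equiv.Perm (Fin n)) : Finset (Fin n → L) :=
  (rearrangements b).filter fun w => w ∘ σ = w

theorem mem_fixedRearrangements {b w : Fin n → L} {σ : Equiv.Perm (Fin n)} :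
    w ∈ fixedRearrangements b σ ↔ w ∈ rearrangements b ∧ w ∘ σ = w :=
  Finset.mem_filter

theorem comp_mul_inv_comp (b : Fin n → L) (σ τ : Equiv.Perm (Fin n)) :
    (b ∘ ⇑(σ * τ)⁻¹) ∘ σ = b ∘ ⇑τ⁻¹ := by
  ext
  simp

variable [LinearOrder L]

theorem sort_lexWord (w : (Fin n → L) × (Fin n → L) × (Fin n → L)) :
    Tuple.sort (lexWord w) = Tuple.sort w.1 * Tuple.sort (w.2.1 ∘ Tuple.sort w.1) *
      Tuple.sort (w.2.2 ∘ ⇑(Tuple.sort w.1 * Tuple.sort (w.2.1 ∘ Tuple.sort w.1))) := by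
  rw [← sort_toLex w.2.1 w.1]
  exact sort_toLex w.2.2 _

/-- The triples of permutations with product one, each of which is the stable sorting permutation
of the rearrangement of `bᵢ` it defines. -/
def stableTriples (b₁ b₂ b₃ : Fin n → L) :
    Finset (Equiv.Perm (Fin n) × Equiv.Perm (Fin n) × Equiv.Perm (Fin n)) :=
  Finset.univ.filter fun t => t.1 * t.2.1 * t.2.2 = 1 ∧ Tuple.sort (b₁ ∘ ⇑t.1⁻¹) = t.1 ∧
    Tuple.sort (b₂ ∘ ⇑t.2.1⁻¹) = t.2.1 ∧ Tuple.sort (b₃ ∘ ⇑t.2.2⁻¹) = t.2.2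

theorem comp_mul_inv_sort_comp {b w : Fin n → L} (hb : Monotone b) (hw : w ∈ rearrangements b)
    (σ : Equiv.Perm (Fin n)) : b ∘ ⇑(σ * Tuple.sort (w ∘ σ))⁻¹ = w := by
  rw [mul_inv_rev, Equiv.Perm.coe_mul, ← Function.comp_assoc,
    comp_inv_sort_of_mem_rearrangements hb (comp_mem_rearrangements hw σ)]
  ext
  simp

variable {b₁ b₂ b₃ : Fin n → L}

-- Three words with sorted `lexWord` are sorted by stably sorting the first word, then the second,
-- then the third, and the three sorting steps compose to the identity.
theorem card_stableTriples (h₁ : Monotone b₁) (h₂ : Monotone b₂) (h₃ : Monotone b₃) :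
    (stableTriples b₁ b₂ b₃).card =
      ((rearrangements b₁ ×ˢ rearrangements b₂ ×ˢ rearrangements b₃).filter
        fun w => Monotone (lexWord w)).card := by
  have monotone_iff (w : (Fin n → L) × (Fin n → L) × (Fin n → L)) :
      Monotone (lexWord w) ↔ Tuple.sort w.1 * Tuple.sort (w.2.1 ∘ Tuple.sort w.1) *
        Tuple.sort (w.2.2 ∘ ⇑(Tuple.sort w.1 * Tuple.sort (w.2.1 ∘ Tuple.sort w.1))) = 1 := by
    rw [← sort_lexWord]
    exact Tuple.sort_eq_refl_iff_monotone.symm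
  refine Finset.card_nbij'
    (fun t => (b₁ ∘ ⇑t.1⁻¹, b₂ ∘ ⇑(t.1 * t.2.1)⁻¹, b₃ ∘ ⇑(t.1 * t.2.1 * t.2.2)⁻¹))
    (fun w => (Tuple.sort w.1, Tuple.sort (w.2.1 ∘ Tuple.sort w.1),
      Tuple.sort (w.2.2 ∘ ⇑(Tuple.sort w.1 * Tuple.sort (w.2.1 ∘ Tuple.sort w.1)))))
    ?_ ?_ ?_ ?_
  · rintro ⟨σ, τ, ρ⟩ ht
    obtain ⟨hmul, hσ, hτ, hρ⟩ := (Finset.mem_filter.1 ht).2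
    simp only [Finset.coe_filter, Set.mem_ofPred_eq, Finset.mem_product, monotone_iff]
    refine ⟨⟨comp_perm_mem_rearrangements _ _, comp_perm_mem_rearrangements _ _,
      comp_perm_mem_rearrangements _ _⟩, ?_⟩
    rw [hσ, comp_mul_inv_comp, hτ, comp_mul_inv_comp, hρ, hmul]
  · rintro ⟨u, v, w⟩ hw
    simp only [Finset.coe_filter, Set.mem_ofPred_eq, Finset.mem_product, monotone_iff] at hw
    obtain ⟨⟨hu, hv, hw⟩, hmul⟩ := hw
    simp only [stableTriples, Finset.coe_filter, Finset.mem_univ, true_and, Set.mem_ofPred_eq]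
    refine ⟨hmul, ?_, ?_, ?_⟩
    · rw [comp_inv_sort_of_mem_rearrangements h₁ hu]
    · rw [comp_inv_sort_of_mem_rearrangements h₂ (comp_mem_rearrangements hv _)]
    · rw [comp_inv_sort_of_mem_rearrangements h₃ (comp_mem_rearrangements hw _)]
  · rintro ⟨σ, τ, ρ⟩ ht
    obtain ⟨-, hσ, hτ, hρ⟩ := (Finset.mem_filter.1 ht).2
    simp only [hσ, comp_mul_inv_comp, hτ, hρ]
  · rintro ⟨u, v, w⟩ hw
    obtain ⟨⟨hu, hv, hw⟩, -⟩ := by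
      simpa only [Finset.coe_filter, Set.mem_ofPred_eq, Finset.mem_product] using hw
    simp only [comp_inv_sort_of_mem_rearrangements h₁ hu, comp_mul_inv_sort_comp h₂ hv,
      comp_mul_inv_sort_comp h₃ hw]

theorem factorial_mul_card_stableTriples (h₁ : Monotone b₁) (h₂ : Monotone b₂)
    (h₃ : Monotone b₃) :
    n.factorial * (stableTriples b₁ b₂ b₃).card =
      ∑ σ, (fixedRearrangements b₁ σ).card * (fixedRearrangements b₂ σ).card *
        (fixedRearrangements b₃ σ).card := by
  set S := rearrangements b₁ ×ˢ rearrangements b₂ ×ˢ rearrangements b₃ with hS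
  have closed : ∀ f ∈ S.image lexWord, ∀ σ : Equiv.Perm (Fin n), f ∘ σ ∈ S.image lexWord := by
    simp only [Finset.forall_mem_image, lexWord_comp, lexWord_injective.mem_finset_image]
    intro w hw σ
    simp only [hS, Finset.mem_product] at hw ⊢
    exact ⟨comp_mem_rearrangements hw.1 σ, comp_mem_rearrangements hw.2.1 σ,
      comp_mem_rearrangements hw.2.2 σ⟩
  have := factorial_mul_card_filter_monotone _ closed
  simp only [Finset.filter_image, Finset.card_image_of_injective _ lexWord_injective] at this
  rw [card_stableTriples h₁ h₂ h₃, this]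
  refine Finset.sum_congr rfl fun σ _ => ?_
  rw [mul_assoc, ← Finset.card_product, ← Finset.card_product]
  congr 1
  ext w
  simp only [hS, fixedRearrangements, Finset.mem_filter, Finset.mem_product, lexWord_comp,
    lexWord_injective.eq_iff, Prod.ext_iff]
  tauto

end Triples

section PowerSums

theorem coeff_prod_psum {ι : Type*} [Fintype ι] {k : ι → ℕ} (hk : ∀ i, k i ≠ 0) (d : ℕ →₀ ℕ) :
    MvPowerSeries.coeff d (∏ i, psum (k i)) =
      (Nat.card {c : ι → ℕ // ∑ i, Finsupp.single (c i) (k i) = d} : ℂ) := by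
  have prod_coeff_psum (l : ι →₀ ℕ →₀ ℕ) : ∏ i, MvPowerSeries.coeff (l i) (psum (k i)) =
      if ∀ i, ∃ j, l i = Finsupp.single j (k i) then 1 else 0 :=
    Finset.prod_ite_zero.trans (by simp)
  rw [MvPowerSeries.coeff_prod, Finset.sum_congr rfl fun l _ => prod_coeff_psum l, Finset.sum_boole,
    ← Nat.card_eq_finsetCard]
  refine congrArg _ (Nat.card_eq_of_bijective (fun c => ⟨Finsupp.equivFunOnFinite.symm
    fun i => Finsupp.single (c.1 i) (k i), by
      simpa using ⟨c.2, fun i => ⟨c.1 i, rfl⟩⟩⟩) ⟨?_, ?_⟩).symm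
  · intro c c' h
    ext i : 2
    exact (Finsupp.single_left_inj (hk i)).1 (DFunLike.congr_fun (Subtype.mk.inj h) i)
  · rintro ⟨l, hl⟩
    obtain ⟨hsum, hsingle⟩ := by simpa using hl
    choose c hc using hsingle
    refine ⟨⟨c, by simpa only [hc] using hsum⟩, Subtype.ext (Finsupp.ext fun i => (hc i).symm)⟩

end PowerSums

section Cycles

variable {α β : Type*}

theorem content_comp [Fintype α] {ι : Type*} [Fintype ι] [DecidableEq ι] (π : α → ι) (c : ι → β) :
    content (c ∘ π) =
      ∑ i, Finsupp.single (c i) (Finset.univ.filter fun x => π x = i).card := by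
  rw [content, ← Finset.sum_fiberwise Finset.univ π]
  refine Finset.sum_congr rfl fun i _ => ?_
  rw [Finset.sum_congr rfl fun x hx => by
    rw [Function.comp_apply, (Finset.mem_filter.1 hx).2]]
  simp

theorem apply_eq_of_sameCycle [Finite α] {σ : Equiv.Perm α} {w : α → β} (hw : w ∘ σ = w) {x y : α}
    (hxy : σ.SameCycle x y) : w x = w y := by
  obtain ⟨i, rfl⟩ := hxy.exists_nat_pow_eq
  have hsemi : Function.Semiconj w σ id := fun z => congrFun hw z
  rw [Equiv.Perm.coe_pow, hsemi.iterate_right i x, Function.iterate_id, id]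

variable [Fintype α] [DecidableEq α]

/-- The cycles of a permutation, fixed points included. -/
abbrev Cycles (σ : Equiv.Perm α) : Type _ :=
  {c // c ∈ σ.cycleFactorsFinset} ⊕ Function.fixedPoints σ

/-- The number of points of a cycle. -/
def cycleLength (σ : Equiv.Perm α) : Cycles σ → ℕ :=
  Sum.elim (fun c => c.1.support.card) fun _ => 1

/-- The cycle through a point. -/
def cycleThrough (σ : Equiv.Perm α) (x : α) : Cycles σ :=
  if h : σ x = x then Sum.inr ⟨x, h⟩ else
    Sum.inl ⟨σ.cycleOf x, Equiv.Perm.cycleOf_mem_cycleFactorsFinset_iff.2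
      (Equiv.Perm.mem_support.2 h)⟩

variable (σ : Equiv.Perm α)

theorem cycleLength_ne_zero (q : Cycles σ) : cycleLength σ q ≠ 0 := by
  rcases q with c | -
  · have := (Equiv.Perm.mem_cycleFactorsFinset_iff.1 c.2).1.two_le_card_support
    simp only [cycleLength, Sum.elim_inl]
    lia
  · simp [cycleLength]

theorem cycleThrough_eq_inl_iff {x : α} {c : {c // c ∈ σ.cycleFactorsFinset}} :
    cycleThrough σ x = Sum.inl c ↔ x ∈ c.1.support := by
  by_cases hx : σ x = x
  · have := mt (@Equiv.Perm.mem_cycleFactorsFinset_support_le _ _ _ _ _ c.2 x)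
      (Equiv.Perm.notMem_support.2 hx)
    simpa [cycleThrough, hx] using this
  · simp only [cycleThrough, hx, dite_false, Sum.inl.injEq]
    refine ⟨?_, fun hc => Subtype.ext (Equiv.Perm.cycle_is_cycleOf hc c.2).symm⟩
    rintro rfl
    simpa using hx

theorem cycleThrough_eq_inr_iff {x : α} {y : Function.fixedPoints σ} :
    cycleThrough σ x = Sum.inr y ↔ x = y := by
  by_cases hx : σ x = x
  · simp [cycleThrough, hx, Subtype.ext_iff]
  · simp only [cycleThrough, hx, dite_false, reduceCtorEq, false_iff]
    rintro rfl
    exact hx y.2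

theorem card_filter_cycleThrough_eq (q : Cycles σ) :
    (Finset.univ.filter fun x => cycleThrough σ x = q).card = cycleLength σ q := by
  rcases q with c | y
  · exact congrArg Finset.card (by ext x; simp [cycleThrough_eq_inl_iff])
  · exact Finset.card_eq_one.2 ⟨y, by ext x; simp [cycleThrough_eq_inr_iff]⟩

theorem cycleThrough_surjective : Function.Surjective (cycleThrough σ) := by
  intro q
  have hcard := cycleLength_ne_zero σ q
  rw [← card_filter_cycleThrough_eq, Finset.card_ne_zero] at hcard
  simpa [Finset.Nonempty] using hcard

theorem cycleThrough_eq_iff_sameCycle {x y : α} :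
    cycleThrough σ x = cycleThrough σ y ↔ σ.SameCycle x y := by
  rcases hy : cycleThrough σ y with c | z
  · have hyc := (cycleThrough_eq_inl_iff σ).1 hy
    rw [cycleThrough_eq_inl_iff, Equiv.Perm.cycle_is_cycleOf hyc c.2,
      Equiv.Perm.mem_support_cycleOf_iff, Equiv.Perm.sameCycle_comm, and_iff_left_iff_imp]
    exact fun _ => Equiv.Perm.mem_cycleFactorsFinset_support_le c.2 hyc
  · obtain rfl := (cycleThrough_eq_inr_iff σ).1 hy
    rw [cycleThrough_eq_inr_iff]
    exact ⟨fun hx => hx ▸ .refl σ _, fun hxy => (hxy.symm.eq_of_left z.2).symm⟩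

theorem comp_eq_self_iff_factorsThrough {w : α → β} :
    w ∘ σ = w ↔ w.FactorsThrough (cycleThrough σ) := by
  refine ⟨fun hw _ _ hxy => ?_, fun hw => funext fun x => hw ?_⟩
  · exact apply_eq_of_sameCycle hw ((cycleThrough_eq_iff_sameCycle σ).1 hxy)
  · exact (cycleThrough_eq_iff_sameCycle σ).2 (Equiv.Perm.sameCycle_apply_left.2 (.refl σ x))

end Cycles

theorem pProd_fullCycleType {n : ℕ} (σ : Equiv.Perm (Fin n)) :
    pProd (fullCycleType σ) = ∏ q : Cycles σ, psum (cycleLength σ q) := by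
  have card_fixedPoints : Fintype.card (Function.fixedPoints σ) = n - σ.cycleType.sum := by
    simpa using Equiv.Perm.card_fixedPoints σ
  rw [Fintype.prod_sum_type, pProd, fullCycleType, Multiset.map_add, Multiset.prod_add]
  congr 1
  · rw [Equiv.Perm.cycleType_def, Multiset.map_map]
    exact (Finset.prod_attach σ.cycleFactorsFinset fun c => psum c.support.card).symm
  · simp [cycleLength, card_fixedPoints]

theorem coeff_content_pProd {n : ℕ} (b : Fin n → ℕ) (σ : Equiv.Perm (Fin n)) :
    MvPowerSeries.coeff (content b) (pProd (fullCycleType σ)) =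
      ((fixedRearrangements b σ).card : ℂ) := by
  rw [pProd_fullCycleType, coeff_prod_psum (cycleLength_ne_zero σ), ← Nat.card_eq_finsetCard]
  have content_comp_cycleThrough (c : Cycles σ → ℕ) :
      content (c ∘ cycleThrough σ) = ∑ q, Finsupp.single (c q) (cycleLength σ q) := by
    simp only [content_comp, card_filter_cycleThrough_eq]
  have mem_iff (w : Fin n → ℕ) : w ∈ fixedRearrangements b σ ↔
      content w = content b ∧ w.FactorsThrough (cycleThrough σ) := by
    rw [mem_fixedRearrangements, content_eq_iff_mem_rearrangements,
      comp_eq_self_iff_factorsThrough]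
  refine congrArg _ (Nat.card_eq_of_bijective (fun c => ⟨c.1 ∘ cycleThrough σ, (mem_iff _).2
    ⟨(content_comp_cycleThrough _).trans c.2, fun _ _ => congrArg c.1⟩⟩) ⟨?_, ?_⟩)
  · intro c c' h
    exact Subtype.ext ((cycleThrough_surjective σ).injective_comp_right (Subtype.mk.inj h))
  · rintro ⟨w, hw⟩
    obtain ⟨hcontent, hfactors⟩ := (mem_iff w).1 hw
    obtain ⟨c, rfl⟩ := (Function.factorsThrough_iff w).1 hfactors
    exact ⟨⟨c, by rwa [← content_comp_cycleThrough]⟩, rfl⟩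

section BlockWords

variable {n : ℕ}

/-- The weakly increasing word that jumps exactly at the positions in `I`. -/
def blockWord (n : ℕ) (I : Finset ℕ) (i : Fin n) : ℕ :=
  (I.filter fun m : ℕ => m ≤ i).card

theorem monotone_blockWord (I : Finset ℕ) : Monotone (blockWord n I) := fun _ _ hij =>
  Finset.card_le_card (Finset.monotone_filter_right I fun _ _ hm => le_trans hm hij)

theorem blockWord_eq_iff_of_covBy {I : Finset ℕ} {i j : Fin n} (hij : i ⋖ j) :
    blockWord n I i = blockWord n I j ↔ (j : ℕ) ∉ I := by
  have hsucc : (i : ℕ) + 1 = j := Nat.covBy_iff_add_one_eq.1 hij.coe_fin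
  have hsub : (I.filter fun m => m ≤ (i : ℕ)) ⊆ I.filter fun m => m ≤ (j : ℕ) :=
    Finset.monotone_filter_right I fun _ _ hm => le_trans hm hij.le
  constructor
  · intro h hj
    have hmem : (j : ℕ) ∈ I.filter fun m => m ≤ (j : ℕ) := Finset.mem_filter.2 ⟨hj, le_rfl⟩
    rw [← Finset.eq_of_subset_of_card_le hsub h.ge] at hmem
    grind
  · intro hj
    exact congrArg Finset.card (Finset.filter_congr fun m hm => by grind)

theorem mem_permDes_iff_of_covBy {σ : Equiv.Perm (Fin n)} {i j : Fin n} (hij : i ⋖ j) :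
    (j : ℕ) ∈ permDes σ ↔ σ j < σ i := by
  have hsucc : (i : ℕ) + 1 = j := Nat.covBy_iff_add_one_eq.1 hij.coe_fin
  have hi : (⟨j - 1, by lia⟩ : Fin n) = i := Fin.ext (by grind)
  have hj : (j : ℕ) ∈ Finset.Icc 1 (n - 1) := Finset.mem_Icc.2 (by lia)
  simp [permDes, hi, hj]

theorem exists_covBy_of_mem_permDes {σ : Equiv.Perm (Fin n)} {m : ℕ} (hm : m ∈ permDes σ) :
    ∃ i j : Fin n, i ⋖ j ∧ (j : ℕ) = m := by
  simp only [permDes, Finset.mem_filter, Finset.mem_Icc] at hm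
  refine ⟨⟨m - 1, by lia⟩, ⟨m, by lia⟩, ?_, rfl⟩
  rw [Fin.covBy_iff, Nat.covBy_iff_add_one_eq]
  exact Nat.sub_add_cancel hm.1.1

theorem permDes_subset_iff {I : Finset ℕ} {σ : Equiv.Perm (Fin n)} :
    permDes σ ⊆ I ↔ ∀ i j : Fin n, i ⋖ j → (j : ℕ) ∉ I → σ i < σ j := by
  constructor
  · intro h i j hij hj
    have hle : σ i ≤ σ j := not_lt.1 (mt (mem_permDes_iff_of_covBy hij).2 (mt (@h _) hj))
    exact hle.lt_of_ne (σ.injective.ne hij.ne)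
  · intro h m hm
    obtain ⟨i, j, hij, rfl⟩ := exists_covBy_of_mem_permDes hm
    exact not_imp_comm.1 (h i j hij) ((mem_permDes_iff_of_covBy hij).1 hm).not_gt

theorem sort_blockWord_comp_inv_eq_iff {I : Finset ℕ} {σ : Equiv.Perm (Fin n)} :
    Tuple.sort (blockWord n I ∘ ⇑σ⁻¹) = σ ↔ permDes σ ⊆ I := by
  rw [sort_comp_inv_eq_iff (monotone_blockWord I), permDes_subset_iff]
  constructor
  · exact fun h i j hij hj => h i j hij.lt ((blockWord_eq_iff_of_covBy hij).2 hj)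
  · intro h i j hij hblock
    have hconn : (blockWord n I ⁻¹' {blockWord n I j}).OrdConnected :=
      Set.ordConnected_singleton.preimage_mono (monotone_blockWord I)
    refine strictMonoOn_of_lt_succ hconn (fun a ha ha₁ ha₂ => ?_) hblock rfl hij
    have hcov := Order.covBy_succ_of_not_isMax ha
    exact h _ _ hcov ((blockWord_eq_iff_of_covBy hcov).1 (ha₁.trans ha₂.symm))

end BlockWords

section ReadingWords

/-- The position of a cell in the reading order: by columns from left to right, and from bottom to
top within a column. -/
def readingKey : ℕ × ℕ ≃ ℕ ×ₗ ℕᵒᵈ :=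
  (Equiv.prodComm ℕ ℕ).trans ((Equiv.refl ℕ).prodCongr OrderDual.toDual |>.trans toLex)

theorem readingKey_lt_iff {c c' : ℕ × ℕ} :
    readingKey c < readingKey c' ↔ c.2 < c'.2 ∨ c.2 = c'.2 ∧ c'.1 < c.1 :=
  Prod.Lex.toLex_lt_toLex

variable {μ : YoungDiagram} {n : ℕ} (hμ : μ.cells.card = n)

/-- The cells of a diagram, numbered in reading order. -/
def readingCell : Fin n ≃ {c // c ∈ μ.cells} :=
  ((μ.cells.map readingKey.toEmbedding).orderIsoOfFin
    ((Finset.card_map _).trans hμ)).toEquiv.trans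
    (readingKey.subtypeEquiv fun _ => (Finset.mem_map' readingKey.toEmbedding).symm).symm

theorem readingKey_readingCell_lt_iff {x y : Fin n} :
    readingKey (readingCell hμ x).1 < readingKey (readingCell hμ y).1 ↔ x < y := by
  simp [readingCell]

/-- A filling of the cells, read in reading order, is a tableau word if it is weakly increasing
along rows and strictly increasing down columns. -/
def IsTableauWord {L : Type*} [Preorder L] (w : Fin n → L) : Prop :=
  ∀ x y : Fin n,
    ((readingCell hμ x).1.1 = (readingCell hμ y).1.1 →
      (readingCell hμ x).1.2 < (readingCell hμ y).1.2 → w x ≤ w y) ∧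
    ((readingCell hμ x).1.2 = (readingCell hμ y).1.2 →
      (readingCell hμ x).1.1 < (readingCell hμ y).1.1 → w x < w y)

-- Stable sorting breaks ties in reading order, so it turns equal letters, which lie in distinct
-- columns, into letters increasing from left to right.
theorem isTableauWord_sort_inv_iff {L : Type*} [LinearOrder L] {w : Fin n → L} :
    IsTableauWord hμ ⇑(Tuple.sort w)⁻¹ ↔ IsTableauWord hμ w := by
  refine forall₂_congr fun x y => and_congr ?_ ?_
  · refine forall₂_congr fun _ hcol => ?_
    have hxy : x < y := by
      rw [← readingKey_readingCell_lt_iff hμ, readingKey_lt_iff]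
      exact .inl hcol
    rw [((Equiv.injective _).ne hxy.ne).le_iff_lt, sort_inv_lt_sort_inv_iff, le_iff_lt_or_eq]
    simp [hxy]
  · refine forall₂_congr fun hcol hrow => ?_
    have hyx : y < x := by
      rw [← readingKey_readingCell_lt_iff hμ, readingKey_lt_iff]
      exact .inr ⟨hcol.symm, hrow⟩
    rw [sort_inv_lt_sort_inv_iff]
    simp only [hyx.not_gt, and_false, or_false]

/-- The entries of a tableau, read in reading order. -/
def readingWord (T : SemistandardYoungTableau μ) (x : Fin n) : ℕ :=
  T (readingCell hμ x).1.1 (readingCell hμ x).1.2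

theorem readingWord_symm (T : SemistandardYoungTableau μ) {i j : ℕ} (hc : (i, j) ∈ μ.cells) :
    readingWord hμ T ((readingCell hμ).symm ⟨(i, j), hc⟩) = T i j := by
  simp [readingWord]

theorem readingWord_injective : Function.Injective (readingWord (n := n) hμ) := by
  intro T T' h
  ext i j
  by_cases hc : (i, j) ∈ μ.cells
  · rw [← readingWord_symm hμ T hc, h, readingWord_symm]
  · rw [T.zeros hc, T'.zeros hc]

theorem isTableauWord_readingWord (T : SemistandardYoungTableau μ) :
    IsTableauWord hμ (readingWord hμ T) := by
  refine fun x y => ⟨fun hrow hcol => ?_, fun hcol hrow => ?_⟩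
  · rw [readingWord, readingWord, hrow]
    exact T.row_weak hcol (readingCell hμ y).2
  · rw [readingWord, readingWord, hcol]
    exact T.col_strict hrow (readingCell hμ y).2

theorem exists_readingWord_eq {w : Fin n → ℕ} (hw : IsTableauWord hμ w) :
    ∃ T : SemistandardYoungTableau μ, readingWord hμ T = w := by
  refine ⟨{
    entry i j := if hc : (i, j) ∈ μ.cells then w ((readingCell hμ).symm ⟨(i, j), hc⟩) else 0
    row_weak' := fun {i j₁ j₂} hj hc => ?_
    col_strict' := fun {i₁ i₂ j} hi hc => ?_
    zeros' := fun hc => dif_neg hc }, ?_⟩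
  · have hc₁ : (i, j₁) ∈ μ.cells := μ.up_left_mem le_rfl hj.le hc
    have hc₂ : (i, j₂) ∈ μ.cells := hc
    simpa [hc₁, hc₂, hj] using
      (hw ((readingCell hμ).symm ⟨_, hc₁⟩) ((readingCell hμ).symm ⟨_, hc₂⟩)).1
  · have hc₁ : (i₁, j) ∈ μ.cells := μ.up_left_mem hi.le le_rfl hc
    have hc₂ : (i₂, j) ∈ μ.cells := hc
    simpa [hc₁, hc₂, hi] using
      (hw ((readingCell hμ).symm ⟨_, hc₁⟩) ((readingCell hμ).symm ⟨_, hc₂⟩)).2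
  · ext x
    exact (dif_pos (readingCell hμ x).2).trans (congrArg w ((readingCell hμ).symm_apply_apply x))

theorem ssytWeight_eq_content (T : SemistandardYoungTableau μ) (j : ℕ) :
    ssytWeight T j = content (readingWord hμ T) j := by
  rw [content_apply, ssytWeight]
  refine (Finset.card_bij (fun x _ => (readingCell hμ x).1) (fun x hx => ?_) (fun x _ y _ hxy => ?_)
    fun c hc => ?_).symm
  · exact Finset.mem_filter.2 ⟨(readingCell hμ x).2, (Finset.mem_filter.1 hx).2⟩
  · exact (readingCell hμ).injective (Subtype.ext hxy)
  · obtain ⟨hcμ, hTc⟩ := Finset.mem_filter.1 hc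
    refine ⟨(readingCell hμ).symm ⟨c, hcμ⟩, ?_, by simp⟩
    exact Finset.mem_filter.2 ⟨Finset.mem_univ _, (readingWord_symm hμ T hcμ).trans hTc⟩

theorem isTableauWord_comp_iff {L M : Type*} [LinearOrder L] [Preorder M] {w : Fin n → L}
    {g : L → M} (hg : StrictMono g) : IsTableauWord hμ (g ∘ w) ↔ IsTableauWord hμ w := by
  simp only [IsTableauWord, Function.comp_apply, hg.le_iff_le, hg.lt_iff_lt]

theorem natCard_tableaux_eq_card_filter {ι : Type*} [Fintype ι] {f : ι → Fin n → ℕ} {q : ι → Prop}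
    [DecidablePred q] (hf : Set.InjOn f {i | q i}) {p : SemistandardYoungTableau μ → Prop}
    (hp : ∀ T, p T ↔ ∃ i, q i ∧ f i = readingWord hμ T) :
    Nat.card {T // p T} = (Finset.univ.filter fun i => IsTableauWord hμ (f i) ∧ q i).card := by
  have himage : readingWord hμ '' {T | p T} = f '' {i | IsTableauWord hμ (f i) ∧ q i} := by
    ext w
    constructor
    · rintro ⟨T, hT, rfl⟩
      obtain ⟨i, hi, hfi⟩ := (hp T).1 hT
      exact ⟨i, ⟨hfi ▸ isTableauWord_readingWord hμ T, hi⟩, hfi⟩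
    · rintro ⟨i, ⟨htab, hi⟩, rfl⟩
      obtain ⟨T, hT⟩ := exists_readingWord_eq hμ htab
      exact ⟨T, (hp T).2 ⟨i, hi, hT.symm⟩, hT⟩
  calc Nat.card {T // p T} = {T | p T}.ncard := Nat.card_coe_set_eq _
    _ = (f '' {i | IsTableauWord hμ (f i) ∧ q i}).ncard := by
      rw [← himage, Set.ncard_image_of_injective _ (readingWord_injective hμ)]
    _ = {i | IsTableauWord hμ (f i) ∧ q i}.ncard :=
      (hf.mono fun _ => And.right).ncard_image
    _ = _ := by rw [← Set.ncard_coe_finset, Finset.coe_filter_univ]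

theorem coeff_content_blockWord_schur (I : Finset ℕ) :
    MvPowerSeries.coeff (content (blockWord n I)) (schur μ) =
      (Finset.univ.filter fun σ : Equiv.Perm (Fin n) =>
        IsTableauWord hμ ⇑σ⁻¹ ∧ permDes σ ⊆ I).card := by
  have hinj : Set.InjOn (fun σ : Equiv.Perm (Fin n) => blockWord n I ∘ ⇑σ⁻¹)
      {σ | permDes σ ⊆ I} := fun σ hσ τ hτ h => by
    rw [← sort_blockWord_comp_inv_eq_iff.2 hσ, ← sort_blockWord_comp_inv_eq_iff.2 hτ]
    exact congrArg _ h
  refine congrArg Nat.cast ((natCard_tableaux_eq_card_filter hμ hinj fun T => ?_).trans ?_)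
  · simp only [ssytWeight_eq_content hμ, ← DFunLike.ext_iff, content_eq_iff_mem_rearrangements]
    constructor
    · intro hT
      have hcomp := comp_inv_sort_of_mem_rearrangements (monotone_blockWord I) hT
      exact ⟨_, sort_blockWord_comp_inv_eq_iff.1 (congrArg _ hcomp), hcomp⟩
    · rintro ⟨σ, -, hσ⟩
      exact hσ ▸ comp_perm_mem_rearrangements _ _
  · refine congrArg Finset.card (Finset.filter_congr fun σ _ => and_congr_left fun hσ => ?_)
    rw [← isTableauWord_sort_inv_iff, sort_blockWord_comp_inv_eq_iff.2 hσ]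

section Standard

variable {T : SemistandardYoungTableau μ} {σ : Equiv.Perm (Fin n)}

theorem isStdYT_iff :
    IsStdYT n T ↔ ∃ σ : Equiv.Perm (Fin n), ∀ i, readingWord hμ T (σ i) = i + 1 := by
  have hcard (k : ℕ) : (μ.cells.filter fun c => T c.1 c.2 = k).card =
      (Finset.univ.filter fun x => readingWord hμ T x = k).card :=
    (ssytWeight_eq_content hμ T k).trans (content_apply _ _)
  simp only [IsStdYT, hcard]
  constructor
  · intro h
    have hpos (i : Fin n) : ∃ x, readingWord hμ T x = i + 1 := by
      obtain ⟨x, hx⟩ := Finset.card_eq_one.1 (h (i + 1) (Finset.mem_Icc.2 (by lia)))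
      exact ⟨x, by simpa using (Finset.ext_iff.1 hx x).2 (Finset.mem_singleton_self x)⟩
    choose pos hpos using hpos
    have hinj : Function.Injective pos := fun i j hij =>
      Fin.ext (Nat.succ_injective ((hpos i).symm.trans (hij ▸ hpos j)))
    exact ⟨Equiv.ofBijective pos (Finite.injective_iff_bijective.1 hinj), hpos⟩
  · rintro ⟨σ, hσ⟩ k hk
    obtain ⟨i, rfl⟩ : ∃ i : Fin n, (i : ℕ) + 1 = k :=
      ⟨⟨k - 1, by grind⟩, Nat.sub_add_cancel (Finset.mem_Icc.1 hk).1⟩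
    refine Finset.card_eq_one.2 ⟨σ i, Finset.ext fun x => ?_⟩
    obtain ⟨j, rfl⟩ := σ.surjective x
    simp [hσ, Fin.val_inj]

theorem row_lt_row_iff_readingKey_lt
    (hT : Set.InjOn (fun c : ℕ × ℕ => T c.1 c.2) μ.cells) {c c' : ℕ × ℕ} (hc : c ∈ μ.cells)
    (hc' : c' ∈ μ.cells) (hsucc : T c'.1 c'.2 = T c.1 c.2 + 1) :
    c.1 < c'.1 ↔ readingKey c' < readingKey c := by
  rw [readingKey_lt_iff]
  constructor
  · intro hrow
    rcases lt_trichotomy c'.2 c.2 with hcol | hcol | hcol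
    · exact .inl hcol
    · exact .inr ⟨hcol, hrow⟩
    · -- The corner entry would lie strictly between those of `c` and `c'`, which are consecutive.
      have hcorner : (c'.1, c.2) ∈ μ.cells := μ.up_left_mem le_rfl hcol.le hc'
      have hlt : T c.1 c.2 < T c'.1 c.2 := T.col_strict hrow hcorner
      have hle : T c'.1 c.2 ≤ T c'.1 c'.2 := T.row_weak hcol hc'
      have heq : (c'.1, c.2) = c' := hT hcorner hc' (show T c'.1 c.2 = T c'.1 c'.2 by lia)
      exact absurd (congrArg Prod.snd heq) hcol.ne
  · rintro (hcol | ⟨-, hrow⟩)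
    · by_contra! hrow
      have hcorner : (c.1, c'.2) ∈ μ.cells := μ.up_left_mem le_rfl hcol.le hc
      have hle : T c'.1 c'.2 ≤ T c.1 c'.2 := T.col_weak hrow hcorner
      have hle' : T c.1 c'.2 ≤ T c.1 c.2 := T.row_weak hcol hc
      lia
    · exact hrow

theorem exists_readingCell_eq (σ : Equiv.Perm (Fin n)) {c : ℕ × ℕ} (hc : c ∈ μ.cells) :
    ∃ i, (readingCell hμ (σ i)).1 = c :=
  ((σ.trans (readingCell hμ)).surjective ⟨c, hc⟩).imp fun _ => congrArg Subtype.val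

theorem entry_eq_succ_iff (hσ : ∀ i, readingWord hμ T (σ i) = i + 1) {c : ℕ × ℕ}
    (hc : c ∈ μ.cells) {i : Fin n} : T c.1 c.2 = i + 1 ↔ c = (readingCell hμ (σ i)).1 := by
  obtain ⟨j, rfl⟩ := exists_readingCell_eq hμ σ hc
  calc readingWord hμ T (σ j) = i + 1 ↔ j = i := by rw [hσ, Nat.add_right_cancel_iff, Fin.val_inj]
    _ ↔ _ := by simp

theorem injOn_entry (hσ : ∀ i, readingWord hμ T (σ i) = i + 1) :
    Set.InjOn (fun c : ℕ × ℕ => T c.1 c.2) μ.cells := by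
  intro c hc c' hc' hcc'
  obtain ⟨i, rfl⟩ := exists_readingCell_eq hμ σ hc
  exact ((entry_eq_succ_iff hμ hσ hc').1 (hcc'.symm.trans (hσ i))).symm

theorem sytDes_eq_permDes (hσ : ∀ i, readingWord hμ T (σ i) = i + 1) :
    sytDes n T = permDes σ := by
  have hmem (i : Fin n) : (readingCell hμ (σ i)).1 ∈ μ.cells := (readingCell hμ (σ i)).2
  refine Finset.filter_congr fun k hk => ?_
  obtain ⟨k, rfl⟩ := Nat.exists_eq_add_of_le' (Finset.mem_Icc.1 hk).1
  have hk' : k + 1 < n := by grind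
  set i : Fin n := ⟨k, by lia⟩
  set j : Fin n := ⟨k + 1, hk'⟩
  calc (∃ c ∈ μ.cells, ∃ c' ∈ μ.cells, T c.1 c.2 = k + 1 ∧ T c'.1 c'.2 = k + 1 + 1 ∧ c.1 < c'.1)
    _ ↔ (readingCell hμ (σ i)).1.1 < (readingCell hμ (σ j)).1.1 := by
      constructor
      · rintro ⟨c, hc, c', hc', hcT, hcT', hlt⟩
        rwa [(entry_eq_succ_iff hμ hσ hc (i := i)).1 hcT,
          (entry_eq_succ_iff hμ hσ hc' (i := j)).1 hcT'] at hlt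
      · exact fun hlt => ⟨_, hmem i, _, hmem j, hσ i, hσ j, hlt⟩
    _ ↔ σ j < σ i := by
      rw [row_lt_row_iff_readingKey_lt (injOn_entry hμ hσ) (hmem i) (hmem j) ?_,
        readingKey_readingCell_lt_iff]
      exact (hσ j).trans (congrArg (· + 1) (hσ i).symm)
    _ ↔ ∃ h : k + 1 < n, σ ⟨k + 1, h⟩ < σ i :=
      (exists_prop_of_true (p := k + 1 < n) (q := fun h => σ ⟨k + 1, h⟩ < σ i) hk').symm

end Standard

theorem dCoef_eq_card (I : Finset ℕ) :
    dCoef μ n I = (Finset.univ.filter fun σ : Equiv.Perm (Fin n) =>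
      IsTableauWord hμ ⇑σ⁻¹ ∧ permDes σ = I).card := by
  have hsucc : StrictMono fun i : Fin n => (i : ℕ) + 1 := fun _ _ hij => Nat.succ_lt_succ hij
  have hinj : Function.Injective
      fun σ : Equiv.Perm (Fin n) => (fun i : Fin n => (i : ℕ) + 1) ∘ ⇑σ⁻¹ := fun σ τ h =>
    inv_injective (DFunLike.coe_injective (hsucc.injective.comp_left h))
  refine (natCard_tableaux_eq_card_filter (q := fun σ => permDes σ = I) hμ hinj.injOn
    fun T => ?_).trans ?_
  · simp only [isStdYT_iff hμ, ← exists_and_right]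
    refine exists_congr fun σ => ?_
    have hσ : (fun i : Fin n => (i : ℕ) + 1) ∘ ⇑σ⁻¹ = readingWord hμ T ↔
        ∀ i, readingWord hμ T (σ i) = i + 1 := by
      rw [eq_comm, funext_iff, ← σ.forall_congr_right]
      simp
    rw [hσ, and_comm]
    exact and_congr_left fun hσ => by rw [sytDes_eq_permDes hμ hσ]
  · simp only [isTableauWord_comp_iff hμ hsucc]

end ReadingWords

theorem coeff_content_blockWord_schur_eq_sum_dCoef {μ : YoungDiagram} {n : ℕ}
    (hμ : μ.cells.card = n) (I : Finset ℕ) :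
    MvPowerSeries.coeff (content (blockWord n I)) (schur μ) =
      ∑ I' ∈ Finset.Iic I, (dCoef μ n I' : ℂ) := by
  rw [coeff_content_blockWord_schur hμ, ← Finset.filter_filter]
  refine (congrArg Nat.cast (card_filter_le_eq_sum_Iic _ permDes I)).trans ?_
  simp only [Nat.cast_sum, dCoef_eq_card hμ, Finset.filter_filter]

section Partitions

variable {n : ℕ} (p : n.Partition)

theorem sum_card_filter_lt (s : Multiset ℕ) (hs : ∀ a ∈ s, a ≤ n) :
    ∑ j ∈ Finset.range n, (s.filter fun a => j < a).card = s.sum := by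
  simp only [← Multiset.countP_eq_card_filter]
  induction s using Multiset.induction_on with
  | empty => simp
  | cons a s ih =>
    obtain ⟨ha, hs⟩ := Multiset.forall_mem_cons.1 hs
    have hcount : (Finset.range n).filter (· < a) = Finset.range a := by grind
    rw [Multiset.sum_cons, ← ih hs, add_comm]
    simp only [Multiset.countP_cons, Finset.sum_add_distrib, ← Finset.card_filter, hcount,
      Finset.card_range]

theorem card_cells_toYD : (toYD p).cells.card = n := by
  have hlen : p.parts.card ≤ n := by
    simpa [p.parts_sum] using
      Multiset.card_nsmul_le_sum (s := p.parts) (a := 1) fun _ ha => p.parts_pos ha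
  have hcol (j : ℕ) : (Finset.range n).filter (· < (p.parts.filter fun a => j < a).card) =
      Finset.range (p.parts.filter fun a => j < a).card := by
    have := (Multiset.card_le_card (Multiset.filter_le (fun a => j < a) p.parts)).trans hlen
    grind
  calc (toYD p).cells.card
    _ = ∑ j ∈ Finset.range n,
        ((Finset.range n).filter (· < (p.parts.filter fun a => j < a).card)).card := by
      simp only [toYD, Finset.card_filter, Finset.sum_product_right]
    _ = ∑ j ∈ Finset.range n, (p.parts.filter fun a => j < a).card := by
      simp only [hcol, Finset.card_range]
    _ = n := by
      rw [sum_card_filter_lt _ fun a ha => p.parts_sum ▸ Multiset.le_sum_of_mem ha, p.parts_sum]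

end Partitions

section RibbonCharacters

variable {n : ℕ} (χ : n.Partition → Equiv.Perm (Fin n) → ℂ)

/-- The value at `σ` of the character of the ribbon representation with descent set `I`, in which
the Specht module of shape `λ` has multiplicity `d_{λ,I}`. -/
def ribbonChar (I : Finset ℕ) (σ : Equiv.Perm (Fin n)) : ℂ :=
  ∑ l, χ l σ * dCoef (toYD l) n I

variable {χ}

theorem sum_Iic_ribbonChar {σ : Equiv.Perm (Fin n)}
    (hχ : pProd (fullCycleType σ) = ∑ p : n.Partition, χ p σ • schur (toYD p)) (I : Finset ℕ) :
    ∑ I' ∈ Finset.Iic I, ribbonChar χ I' σ = (fixedRearrangements (blockWord n I) σ).card := by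
  simp only [← coeff_content_pProd, hχ, map_sum, map_smul, smul_eq_mul, ribbonChar,
    coeff_content_blockWord_schur_eq_sum_dCoef (card_cells_toYD _), Finset.mul_sum]
  exact Finset.sum_comm

/-- The number of triples of permutations with product `1` and prescribed descent sets. -/
def descentTripleCount (n : ℕ) (D : Finset ℕ × Finset ℕ × Finset ℕ) : ℕ :=
  ((Finset.univ.filter fun t : Equiv.Perm (Fin n) × Equiv.Perm (Fin n) × Equiv.Perm (Fin n) =>
    t.1 * t.2.1 * t.2.2 = 1).filter
    fun t => (permDes t.1, permDes t.2.1, permDes t.2.2) = D).card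

theorem card_stableTriples_blockWord (D : Finset ℕ × Finset ℕ × Finset ℕ) :
    (stableTriples (blockWord n D.1) (blockWord n D.2.1) (blockWord n D.2.2)).card =
      ∑ D' ∈ Finset.Iic D, descentTripleCount n D' := by
  refine Eq.trans (congrArg Finset.card ?_) (card_filter_le_eq_sum_Iic _ _ D)
  simp only [stableTriples, sort_blockWord_comp_inv_eq_iff, Finset.filter_filter]
  rfl

theorem factorial_mul_descentTripleCount
    (hχ : ∀ σ : Equiv.Perm (Fin n),
      pProd (fullCycleType σ) = ∑ p : n.Partition, χ p σ • schur (toYD p))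
    (D : Finset ℕ × Finset ℕ × Finset ℕ) :
    (n.factorial * descentTripleCount n D : ℂ) =
      ∑ σ, ribbonChar χ D.1 σ * ribbonChar χ D.2.1 σ * ribbonChar χ D.2.2 σ := by
  revert D
  refine congrFun (eq_of_sum_Iic_eq fun D => ?_)
  calc ∑ D' ∈ Finset.Iic D, (n.factorial * descentTripleCount n D' : ℂ)
    _ = (n.factorial * (stableTriples (blockWord n D.1) (blockWord n D.2.1)
        (blockWord n D.2.2)).card : ℕ) := by
      rw [card_stableTriples_blockWord, Nat.cast_mul, Nat.cast_sum, Finset.mul_sum]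
    _ = ∑ σ, (∑ I ∈ Finset.Iic D.1, ribbonChar χ I σ) *
        (∑ J ∈ Finset.Iic D.2.1, ribbonChar χ J σ) * ∑ K ∈ Finset.Iic D.2.2, ribbonChar χ K σ := by
      simp only [factorial_mul_card_stableTriples (monotone_blockWord _) (monotone_blockWord _)
        (monotone_blockWord _), sum_Iic_ribbonChar (hχ _), Nat.cast_sum, Nat.cast_mul]
    _ = ∑ D' ∈ Finset.Iic D,
        ∑ σ, ribbonChar χ D'.1 σ * ribbonChar χ D'.2.1 σ * ribbonChar χ D'.2.2 σ := by
      rw [Finset.sum_comm]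
      refine Finset.sum_congr rfl fun σ _ => ?_
      have hIic : Finset.Iic D = Finset.Iic D.1 ×ˢ Finset.Iic D.2.1 ×ˢ Finset.Iic D.2.2 := rfl
      rw [mul_assoc, Finset.sum_mul_sum, Finset.sum_mul_sum]
      simp only [hIic, Finset.sum_product, mul_assoc, Finset.mul_sum]

theorem sum_ribbonChar_mul (I J K : Finset ℕ) :
    ∑ σ, ribbonChar χ I σ * ribbonChar χ J σ * ribbonChar χ K σ =
      ∑ l, ∑ m, ∑ v, (∑ σ, χ l σ * χ m σ * χ v σ) *
        (dCoef (toYD l) n I * dCoef (toYD m) n J * dCoef (toYD v) n K) := by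
  have hσ (σ : Equiv.Perm (Fin n)) : ribbonChar χ I σ * ribbonChar χ J σ * ribbonChar χ K σ =
      ∑ l, ∑ m, ∑ v, χ l σ * χ m σ * χ v σ *
        (dCoef (toYD l) n I * dCoef (toYD m) n J * dCoef (toYD v) n K) := by
    simp only [ribbonChar]
    rw [mul_assoc, Finset.sum_mul_sum, Finset.sum_mul_sum]
    simp only [Finset.mul_sum]
    refine Finset.sum_congr rfl fun l _ => Finset.sum_congr rfl fun m _ =>
      Finset.sum_congr rfl fun v _ => ?_
    ring
  simp only [hσ, Finset.sum_mul]
  rw [Finset.sum_comm]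
  refine Finset.sum_congr rfl fun l _ => ?_
  rw [Finset.sum_comm]
  exact Finset.sum_congr rfl fun m _ => Finset.sum_comm

end RibbonCharacters

/-- Let `χ λ` be the irreducible character of `S_n` indexed by `λ ⊢ n` (characterized,
via Frobenius, by `p_{cycletype(σ)} = Σ_λ χ^λ(σ) s_λ`). The number of triples
`(σ₁, σ₂, σ₃)` of permutations of `S_n` with `σ₁σ₂σ₃ = id`, `Des(σ₁) = I`,
`Des(σ₂) = J`, `Des(σ₃) = K` equals
`Σ_{λ,μ,ν ⊢ n} g(λ,μ,ν) d_{λ,I} d_{μ,J} d_{ν,K}`, where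
`g(λ,μ,ν) = (1/n!) Σ_σ χ^λ(σ) χ^μ(σ) χ^ν(σ)` is the Kronecker coefficient. -/
theorem stmt9 (n : ℕ) (hn : 1 ≤ n) (I J K : Finset ℕ)
    (χ : n.Partition → Equiv.Perm (Fin n) → ℂ)
    (hχ : ∀ σ : Equiv.Perm (Fin n),
      pProd (fullCycleType σ) = ∑ p : n.Partition, χ p σ • schur (toYD p)) :
    (Nat.card {t : Equiv.Perm (Fin n) × Equiv.Perm (Fin n) × Equiv.Perm (Fin n) //
        t.1 * t.2.1 * t.2.2 = 1 ∧ permDes t.1 = I ∧ permDes t.2.1 = J ∧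
          permDes t.2.2 = K} : ℂ) =
      ∑ l : n.Partition, ∑ m : n.Partition, ∑ v : n.Partition,
        ((n.factorial : ℂ)⁻¹ * ∑ σ : Equiv.Perm (Fin n), χ l σ * χ m σ * χ v σ) *
          (dCoef (toYD l) n I) * (dCoef (toYD m) n J) * (dCoef (toYD v) n K) := by
  have hfact : (n.factorial : ℂ) ≠ 0 := Nat.cast_ne_zero.2 n.factorial_ne_zero
  have hcount : Nat.card {t : Equiv.Perm (Fin n) × Equiv.Perm (Fin n) × Equiv.Perm (Fin n) //
      t.1 * t.2.1 * t.2.2 = 1 ∧ permDes t.1 = I ∧ permDes t.2.1 = J ∧ permDes t.2.2 = K} =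
      descentTripleCount n (I, J, K) := by
    rw [Nat.card_eq_fintype_card, Fintype.card_subtype, descentTripleCount, Finset.filter_filter]
    simp only [Prod.mk.injEq]
  rw [hcount, ← inv_mul_cancel_left₀ hfact (descentTripleCount n (I, J, K) : ℂ),
    factorial_mul_descentTripleCount hχ, sum_ribbonChar_mul]
  simp only [← Finset.mul_sum, mul_assoc]
end
end
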